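/- Let n ≥ 1 and let H(X) ∈ ℤ[X₁,…,Xₙ] be absolutely irreducible (irreducible in ℚ̄[X₁,…,Xₙ]) with deg_{X₁} H ≥ 1 and ‖H‖ ≥ 3, and fix an integer d ≥ 2. Then there exists a finite set E of primes with |E| ≤ C(n,deg H) · log‖H‖ / log log‖H‖, for a constant C(n,deg H) depending only on n and deg H, such that for every prime p ∉ E and every multiplicative character χ of 𝔽_p^× of exact order d (extended to 𝔽_p by χ(0) = 0): Σ_{u ∈ 𝔽_pⁿ, u₁ = 0} |S(u,p)|² ≤ C′ · p^{2n−1}, where S(u,p) := Σ_{x ∈ 𝔽_pⁿ} χ(H(x)) · e_p(u·x) and C′ depends only on n, d and deg H. -/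

import Mathlib

open Polynomial

noncomputable section

/-- The rational function field `ℚ(X₁,…,Xₙ)`. -/
abbrev RF (n : ℕ) := FractionRing (MvPolynomial (Fin n) ℚ)

/-- Base change a polynomial `F ∈ ℤ[Y,X₁,…,Xₙ]` (written as a polynomial in `Y`
with coefficients in `ℤ[X₁,…,Xₙ]`) to `ℚ[Y,X₁,…,Xₙ]`. -/
def toQ {n : ℕ} (F : Polynomial (MvPolynomial (Fin n) ℤ)) :
    Polynomial (MvPolynomial (Fin n) ℚ) :=
  F.map (MvPolynomial.map (Int.castRingHom ℚ))

/-- View a polynomial in `ℚ[X][Y]` as a polynomial in `ℚ(X)[Y]`. -/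
def toFracQ {n : ℕ} (F : Polynomial (MvPolynomial (Fin n) ℚ)) : Polynomial (RF n) :=
  F.map (algebraMap (MvPolynomial (Fin n) ℚ) (RF n))

/-- View a polynomial in `ℤ[X][Y]` as a polynomial in `ℚ(X)[Y]`. -/
def toFrac {n : ℕ} (F : Polynomial (MvPolynomial (Fin n) ℤ)) : Polynomial (RF n) :=
  toFracQ (toQ F)

/-- The degree of `F(Y,X)` in the variable `Xᵢ`. -/
def degX {n : ℕ} {R : Type*} [CommSemiring R]
    (F : Polynomial (MvPolynomial (Fin n) R)) (i : Fin n) : ℕ :=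
  F.support.sup fun k => (F.coeff k).degreeOf i

/-- The total degree of `F(Y,X₁,…,Xₙ)` as a polynomial in `n+1` variables. -/
def totalDeg {n : ℕ} {R : Type*} [CommSemiring R]
    (F : Polynomial (MvPolynomial (Fin n) R)) : ℕ :=
  F.support.sup fun k => k + (F.coeff k).totalDegree

/-- `‖g‖`: the maximum absolute value of a coefficient of `g ∈ ℤ[X₁,…,Xₙ]`. -/
def mvNorm {n : ℕ} (g : MvPolynomial (Fin n) ℤ) : ℕ :=
  g.support.sup fun m => (g.coeff m).natAbs

/-- `‖F‖`: the maximum absolute value of a coefficient of `F ∈ ℤ[Y,X₁,…,Xₙ]`. -/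
def polyNorm {n : ℕ} (F : Polynomial (MvPolynomial (Fin n) ℤ)) : ℕ :=
  F.support.sup fun k => mvNorm (F.coeff k)

/-- The counting function
`N(F,B) = #{x ∈ ℤⁿ ∩ [−B,B]ⁿ : ∃ y ∈ ℤ, F(y,x) = 0}`. -/
def NFB {n : ℕ} (F : Polynomial (MvPolynomial (Fin n) ℤ)) (B : ℝ) : ℕ :=
  Set.ncard {x : Fin n → ℤ | (∀ i, |(x i : ℝ)| ≤ B) ∧
    ∃ y : ℤ, Polynomial.eval y (F.map (MvPolynomial.eval x)) = 0}

/-- `F ∈ ℤ[Y,X₁,…,Xₙ]` is absolutely irreducible: irreducible over `ℚ̄`. -/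
def AbsIrred {n : ℕ} (F : Polynomial (MvPolynomial (Fin n) ℤ)) : Prop :=
  Irreducible (F.map (MvPolynomial.map (Int.castRingHom (AlgebraicClosure ℚ))))

/-- `G` has positive degree in `Y` and in each variable `Xᵢ`. -/
def AllPosDeg {n : ℕ} (G : Polynomial (MvPolynomial (Fin n) ℤ)) : Prop :=
  0 < G.natDegree ∧ ∀ i : Fin n, 0 < degX G i

/-- A field extension `M` of `ℚ(X₁,…,Xₙ)` is an `n`-genuine extension: every
`G ∈ ℤ[Y,X₁,…,Xₙ]` irreducible over `ℚ(X)` with `M ≅ ℚ(X)[Y]/(G)` has positive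
degree in each of `Y, X₁, …, Xₙ`. -/
def IsGenuineExt (n : ℕ) (M : Type*) [Field M] [Algebra (RF n) M] : Prop :=
  ∀ G : Polynomial (MvPolynomial (Fin n) ℤ), Irreducible (toFrac G) →
    Nonempty (AdjoinRoot (toFrac G) ≃ₐ[RF n] M) → AllPosDeg G

/-- A field extension `M` of `ℚ(X₁,…,Xₙ)` is strongly `n`-genuine: every
intermediate field strictly containing `ℚ(X)` is `n`-genuine. -/
def IsStronglyGenuineExt (n : ℕ) (M : Type*) [Field M] [Algebra (RF n) M] : Prop :=
  ∀ M' : IntermediateField (RF n) M, M' ≠ ⊥ → IsGenuineExt n M'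

/-- The extension `ℚ(X)[Y]/(Fq)` presented by `Fq ∈ ℚ[X][Y]` is `n`-genuine. -/
def GenuineExtOfQ {n : ℕ} (Fq : Polynomial (MvPolynomial (Fin n) ℚ)) : Prop :=
  ∀ G : Polynomial (MvPolynomial (Fin n) ℤ), Irreducible (toFrac G) →
    Nonempty (AdjoinRoot (toFrac G) ≃ₐ[RF n] AdjoinRoot (toFracQ Fq)) → AllPosDeg G

/-- The extension `ℚ(X)[Y]/(Fq)` presented by `Fq ∈ ℚ[X][Y]` is strongly
`n`-genuine: for any field `M` isomorphic over `ℚ(X)` to `ℚ(X)[Y]/(Fq)`, every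
intermediate field strictly containing `ℚ(X)` is `n`-genuine. -/
def StronglyGenuineExtOfQ {n : ℕ} (Fq : Polynomial (MvPolynomial (Fin n) ℚ)) : Prop :=
  ∀ (M : Type) [Field M] [Algebra (RF n) M],
    Nonempty (AdjoinRoot (toFracQ Fq) ≃ₐ[RF n] M) → IsStronglyGenuineExt n M

/-- An absolutely irreducible `F ∈ ℤ[Y,X₁,…,Xₙ]` is an `n`-genuine polynomial. -/
def IsGenuinePoly {n : ℕ} (F : Polynomial (MvPolynomial (Fin n) ℤ)) : Prop :=
  AbsIrred F ∧ GenuineExtOfQ (toQ F)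

/-- An absolutely irreducible `F ∈ ℤ[Y,X₁,…,Xₙ]` is a strongly `n`-genuine polynomial. -/
def IsStronglyGenuinePoly {n : ℕ} (F : Polynomial (MvPolynomial (Fin n) ℤ)) : Prop :=
  AbsIrred F ∧ StronglyGenuineExtOfQ (toQ F)

/-- The ring map `ℚ[X₁,…,Xₙ] → ℚ[X₁,…,Xₙ]` induced by the linear substitution
`Xᵢ ↦ Σⱼ σᵢⱼ Xⱼ`. -/
def lsubMv {n : ℕ} (σ : Matrix (Fin n) (Fin n) ℚ) :
    MvPolynomial (Fin n) ℚ →+* MvPolynomial (Fin n) ℚ :=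
  (MvPolynomial.aeval (R := ℚ)
    fun i => ∑ j, MvPolynomial.C (σ i j) * MvPolynomial.X j).toRingHom

/-- `F_σ(Y,X) := F(Y,σ(X))` for a linear change of variables `σ`. -/
def applyGL {n : ℕ} (σ : Matrix (Fin n) (Fin n) ℚ)
    (Fq : Polynomial (MvPolynomial (Fin n) ℚ)) : Polynomial (MvPolynomial (Fin n) ℚ) :=
  Fq.map (lsubMv σ)

/-- `F` is `(1,n)`-allowable: absolutely irreducible, monic in `Y`, and
`ℚ(X)[Y]/(F_σ)` is an `n`-genuine extension for every `σ ∈ GLₙ(ℚ)`. -/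
def IsAllowable {n : ℕ} (F : Polynomial (MvPolynomial (Fin n) ℤ)) : Prop :=
  AbsIrred F ∧ F.Monic ∧
    ∀ σ : Matrix (Fin n) (Fin n) ℚ, IsUnit σ.det → GenuineExtOfQ (applyGL σ (toQ F))

/-- `F` is strongly `(1,n)`-allowable: absolutely irreducible, monic in `Y`, and
`ℚ(X)[Y]/(F_σ)` is a strongly `n`-genuine extension for every `σ ∈ GLₙ(ℚ)`. -/
def IsStronglyAllowable {n : ℕ} (F : Polynomial (MvPolynomial (Fin n) ℤ)) : Prop :=
  AbsIrred F ∧ F.Monic ∧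
    ∀ σ : Matrix (Fin n) (Fin n) ℚ, IsUnit σ.det → StronglyGenuineExtOfQ (applyGL σ (toQ F))

/-- `F` has the form (1.2) with parameter `m`:
`F = Y^{md} + f₁(X) Y^{m(d-1)} + ⋯ + f_{d-1}(X) Y^m + f_d(X)` with `f_d ≠ 0`. -/
def HasForm (n m : ℕ) (F : Polynomial (MvPolynomial (Fin n) ℤ)) : Prop :=
  ∃ (d : ℕ) (f : ℕ → MvPolynomial (Fin n) ℤ), 1 ≤ d ∧ f d ≠ 0 ∧
    F = Polynomial.X ^ (m * d) +
      ∑ j ∈ Finset.Icc 1 d, Polynomial.C (f j) * Polynomial.X ^ (m * (d - j))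

/-- `P` has a linear factor in `Y`: `P = (Y − Q(X))·H̃(Y,X)`. -/
def HasLinearFactorY {n : ℕ} {R : Type*} [CommRing R]
    (P : Polynomial (MvPolynomial (Fin n) R)) : Prop :=
  ∃ (Q : MvPolynomial (Fin n) R) (H : Polynomial (MvPolynomial (Fin n) R)),
    P = (Polynomial.X - Polynomial.C Q) * H

/-- The canonical map `ℚ[X₁,…,Xₙ] → ℚ(X)[Y]/(F)`. -/
def structMap {n : ℕ} (F : Polynomial (MvPolynomial (Fin n) ℤ)) :
    MvPolynomial (Fin n) ℚ →+* AdjoinRoot (toFrac F) :=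
  (algebraMap (RF n) (AdjoinRoot (toFrac F))).comp
    (algebraMap (MvPolynomial (Fin n) ℚ) (RF n))

/-- `z ∈ ℚ(X)[Y]/(F)` lies in the subfield `ℚ((Xᵢ)_{i≠j})`: it can be written
as a quotient of two polynomials not involving `Xⱼ`. -/
def CoordMem {n : ℕ} (j : Fin n) (F : Polynomial (MvPolynomial (Fin n) ℤ))
    (z : AdjoinRoot (toFrac F)) : Prop :=
  ∃ a b : MvPolynomial (Fin n) ℚ,
    MvPolynomial.degreeOf j a = 0 ∧ MvPolynomial.degreeOf j b = 0 ∧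
    structMap F b ≠ 0 ∧ z * structMap F b = structMap F a

/-- `z ∈ ℚ(X)[Y]/(F)` is algebraic over the subfield `ℚ((Xᵢ)_{i≠j})`. -/
def AlgOverCoord {n : ℕ} (j : Fin n) (F : Polynomial (MvPolynomial (Fin n) ℤ))
    (z : AdjoinRoot (toFrac F)) : Prop :=
  ∃ P : Polynomial (AdjoinRoot (toFrac F)), P ≠ 0 ∧ (∀ k, CoordMem j F (P.coeff k)) ∧
    Polynomial.eval z P = 0

/-- Substitute `Xᵢ = xᵢ` for `i ∈ I` into `F`, over `ℚ̄`. -/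
def substSome {n : ℕ} (I : Finset (Fin n)) (x : Fin n → ℚ)
    (F : Polynomial (MvPolynomial (Fin n) ℤ)) :
    Polynomial (MvPolynomial (Fin n) (AlgebraicClosure ℚ)) :=
  (toQ F).map
    ((MvPolynomial.aeval (R := ℚ) fun i =>
      if i ∈ I then MvPolynomial.C (algebraMap ℚ (AlgebraicClosure ℚ) (x i))
      else MvPolynomial.X i).toRingHom)

/-- Substitute `Xᵢ = xᵢ` for all `i ≠ i₀` into `F`, over `ℚ̄`. -/
def substKeepFirst {n : ℕ} (i0 : Fin n) (x : {i : Fin n // i ≠ i0} → ℤ)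
    (F : Polynomial (MvPolynomial (Fin n) ℤ)) :
    Polynomial (MvPolynomial (Fin n) (AlgebraicClosure ℚ)) :=
  F.map
    ((MvPolynomial.aeval (R := ℤ) fun i =>
      if h : i = i0 then (MvPolynomial.X i : MvPolynomial (Fin n) (AlgebraicClosure ℚ))
      else MvPolynomial.C ((x ⟨i, h⟩ : ℤ) : AlgebraicClosure ℚ)).toRingHom)

/-- `‖L‖`: maximum absolute value of an entry of an integer matrix. -/
def matNorm {n : ℕ} (L : Matrix (Fin n) (Fin n) ℤ) : ℕ :=
  Finset.univ.sup fun p : Fin n × Fin n => (L p.1 p.2).natAbs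

/-- The standard additive character `e_p(a) = exp(2πi a/p)` on `ZMod p`. -/
def eZp (p : ℕ) (a : ZMod p) : ℂ :=
  Complex.exp (2 * Real.pi * Complex.I * (a.val : ℂ) / (p : ℂ))

/-
By Parseval in the variables other than `u₀`, the restricted second moment of `S(u, p)` is
`p ^ k` times the sum over `y` of the squared modulus of the one-variable character sum
`∑ₐ χ (H (a, y))`, where `n = k + 1`. If `H (·, y)` keeps its degree and is separable modulo `p`,
Weil's bound makes the inner sum `O(√p)`. The exceptional `y` are zeros modulo `p` of the resultant
`Δ` of `H` and its derivative in the first variable, hence there are `O(p ^ (k - 1))` of them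
unless `p` divides all coefficients of `Δ`. As `Δ ≠ 0` and its height is polynomial in `‖H‖`, some
nonzero integer value of `Δ` is `O(‖H‖ ^ (2 * deg H))`, and a number of that size has
`O(log ‖H‖ / log log ‖H‖)` prime factors.

Weil's bound is proved by Stepanov's method. Fibres of `x ↦ f x ^ e`, `e = (p - 1) / d`, are
controlled by an auxiliary polynomial that is small in degree and vanishes to high order on the
fibre; it is nonzero because `f ^ e` satisfies no low-degree algebraic equation, which a resultant
against the Kummer polynomial `T ^ d - f` rules out.
-/

section Resultant

theorem sylvester_induction {R : Type*} [Semiring R] {Q : R → Prop} (zero : Q 0) {f g : R[X]}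
    (hf : ∀ i, Q (f.coeff i)) (hg : ∀ i, Q (g.coeff i)) (m n : ℕ) (i j : Fin (m + n)) :
    Q (sylvester f g m n i j) := by
  induction j using Fin.addCases <;>
    simp only [sylvester, Matrix.of_apply, Fin.addCases_left, Fin.addCases_right] <;>
    split_ifs <;> first | exact zero | apply hf | apply hg

theorem apply_det_le {R ι : Type*} [CommRing R] [Fintype ι] [DecidableEq ι] {δ : R → ℕ}
    (zero : δ 0 = 0) (one : δ 1 = 0) (neg : ∀ a, δ (-a) = δ a)
    (add : ∀ a b, δ (a + b) ≤ max (δ a) (δ b)) (mul : ∀ a b, δ (a * b) ≤ δ a + δ b)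
    {B : ℕ} {M : Matrix ι ι R} (hM : ∀ i j, δ (M i j) ≤ B) :
    δ M.det ≤ Fintype.card ι * B := by
  classical
  have prod_le (s : Finset ι) (a : ι → R) (ha : ∀ i, δ (a i) ≤ B) :
      δ (∏ i ∈ s, a i) ≤ s.card * B := by
    induction s using Finset.induction_on with
    | empty => simp [one]
    | insert i s hi ih =>
      rw [Finset.prod_insert hi, Finset.card_insert_of_notMem hi, add_one_mul, add_comm]
      exact (mul _ _).trans (add_le_add (ha i) ih)
  rw [Matrix.det_apply]
  refine Finset.sum_induction _ (δ · ≤ Fintype.card ι * B)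
    (fun a b ha hb ↦ (add a b).trans (max_le ha hb)) (by simp [zero]) fun σ _ ↦ ?_
  have h := prod_le Finset.univ (fun i ↦ M (σ i) i) fun i ↦ hM _ _
  rcases Int.units_eq_one_or (Equiv.Perm.sign σ) with hσ | hσ <;> simpa [hσ, neg] using h

theorem natDegree_resultant_le {R : Type*} [CommRing R] {f g : R[X][X]} {B : ℕ}
    (hf : ∀ i, (f.coeff i).natDegree ≤ B) (hg : ∀ i, (g.coeff i).natDegree ≤ B) (m n : ℕ) :
    (resultant f g m n).natDegree ≤ (m + n) * B := by
  simpa [resultant] using apply_det_le natDegree_zero natDegree_one natDegree_neg natDegree_add_le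
    (fun _ _ ↦ natDegree_mul_le)
    (sylvester_induction (Q := (natDegree · ≤ B)) (by simp) hf hg m n)

theorem totalDegree_resultant_le {R σ : Type*} [CommRing R] {f g : (MvPolynomial σ R)[X]} {B : ℕ}
    (hf : ∀ i, (f.coeff i).totalDegree ≤ B) (hg : ∀ i, (g.coeff i).totalDegree ≤ B) (m n : ℕ) :
    (resultant f g m n).totalDegree ≤ (m + n) * B := by
  simpa [resultant] using apply_det_le MvPolynomial.totalDegree_zero MvPolynomial.totalDegree_one
    MvPolynomial.totalDegree_neg MvPolynomial.totalDegree_add MvPolynomial.totalDegree_mul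
    (sylvester_induction (Q := (MvPolynomial.totalDegree · ≤ B)) (by simp) hf hg m n)

theorem abs_resultant_le {R : Type*} [CommRing R] [LinearOrder R] [IsStrictOrderedRing R]
    {f g : R[X]} {B : R} (hf : ∀ i, |f.coeff i| ≤ B) (hg : ∀ i, |g.coeff i| ≤ B) (m n : ℕ) :
    |resultant f g m n| ≤ (m + n).factorial * B ^ (m + n) := by
  have zero_le : |(0 : R)| ≤ B := abs_zero.trans_le ((abs_nonneg _).trans (hf 0))
  simpa [resultant] using Matrix.det_le (abv := AbsoluteValue.abs)
    (sylvester_induction (Q := (|·| ≤ B)) zero_le hf hg m n)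

theorem resultant_ne_zero_of_isCoprime_map {R K : Type*} [CommRing R] [CommRing K] [IsDomain K]
    {φ : R →+* K} (hφ : Function.Injective φ) {f g : R[X]} (h : IsCoprime (f.map φ) (g.map φ)) :
    resultant f g ≠ 0 := by
  intro h0
  apply resultant_ne_zero _ _ h
  rw [natDegree_map_eq_of_injective hφ, natDegree_map_eq_of_injective hφ, resultant_map_map, h0,
    map_zero]

theorem resultant_ne_zero_of_monic_of_irreducible {R : Type*} [CommRing R] [IsDomain R]
    [IsIntegrallyClosed R] {f g : R[X]} (hf : f.Monic) (hirr : Irreducible f) (hg : g ≠ 0)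
    (hgf : g.degree < f.degree) : resultant f g ≠ 0 := by
  have inj := IsFractionRing.injective R (FractionRing R)
  have hirr' := (hf.irreducible_iff_irreducible_map_fraction_map (K := FractionRing R)).1 hirr
  refine resultant_ne_zero_of_isCoprime_map inj (hirr'.coprime_iff_not_dvd.2 fun hdvd ↦ ?_)
  refine (degree_le_of_dvd hdvd ((Polynomial.map_ne_zero_iff inj).2 hg)).not_gt ?_
  rwa [degree_map_eq_of_injective inj, degree_map_eq_of_injective inj]

theorem map_resultant_eq_zero_of_eval₂_eq_zero {R A : Type*} [CommRing R] [CommRing A]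
    (π : R →+* A) {x : A} {f g : R[X]} (hf : f.natDegree ≠ 0) (hfx : f.eval₂ π x = 0)
    (hgx : g.eval₂ π x = 0) : π (resultant f g) = 0 := by
  obtain ⟨u, v, -, -, huv⟩ :=
    exists_mul_add_mul_eq_C_resultant f g le_rfl le_rfl (.inl hf)
  simpa [eval₂_add, eval₂_mul, hfx, hgx] using (congrArg (eval₂ π x) huv).symm

end Resultant

section Kummer

theorem irreducible_X_pow_sub_C_of_prime_dvd {R : Type*} [CommRing R] [IsDomain R] {a π : R}
    {d : ℕ} (hd : d ≠ 0) (hπ : Prime π) (hdvd : π ∣ a) (hsq : ¬ π ^ 2 ∣ a) :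
    Irreducible (X ^ d - C a : R[X]) := by
  have hmonic := monic_X_pow_sub_C a hd
  have hdeg : (X ^ d - C a : R[X]).degree = d := degree_X_pow_sub_C (Nat.pos_of_ne_zero hd) a
  refine irreducible_of_eisenstein_criterion (P := Ideal.span {π})
    ((Ideal.span_singleton_prime hπ.ne_zero).2 hπ) ?_ ?_ ?_ ?_ hmonic.isPrimitive
  · rw [hmonic.leadingCoeff, Ideal.mem_span_singleton]
    exact fun h ↦ hπ.not_isUnit (isUnit_of_dvd_one h)
  · intro n hn
    have hn : n ≠ d := by rintro rfl; exact hn.ne' hdeg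
    rw [coeff_sub, coeff_X_pow, if_neg hn, coeff_C, Ideal.mem_span_singleton]
    split_ifs <;> simp [hdvd]
  · rw [hdeg]
    exact_mod_cast Nat.pos_of_ne_zero hd
  · rwa [coeff_sub, coeff_X_pow, if_neg hd.symm, coeff_C_zero, zero_sub,
      Ideal.span_singleton_pow, Ideal.mem_span_singleton, dvd_neg]

variable {K A : Type*} [Field K] [CommRing A] (π : K[X] →+* A) {F : K[X]} {d B : ℕ} {S : K[X][X]}

theorem irreducible_X_pow_sub_C_of_squarefree (hd : d ≠ 0) (hF : Squarefree F)
    (hF0 : 0 < F.natDegree) : Irreducible (X ^ d - C F : K[X][X]) := by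
  obtain ⟨π, hπ, hdvd⟩ := WfDvdMonoid.exists_irreducible_factor
    (not_isUnit_of_natDegree_pos F hF0) hF.ne_zero
  exact irreducible_X_pow_sub_C_of_prime_dvd hd hπ.prime hdvd
    fun h ↦ hπ.not_isUnit (hF π (by rwa [← sq]))

theorem eq_zero_of_eval₂_eq_zero_of_pow_eq (hF : Squarefree F) (hF0 : 0 < F.natDegree)
    (hFB : F.natDegree ≤ B) (hπ : ∀ u, π u = 0 → u.natDegree < 2 * d * B → u = 0) {x : A}
    (hx : x ^ d = π F) (hSd : S.natDegree < d) (hSB : ∀ i, (S.coeff i).natDegree ≤ B)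
    (hS : S.eval₂ π x = 0) : S = 0 := by
  by_contra hS0
  have hd : d ≠ 0 := by omega
  have hdeg : (X ^ d - C F : K[X][X]).natDegree = d := natDegree_X_pow_sub_C
  have hcoeff (i : ℕ) : ((X ^ d - C F : K[X][X]).coeff i).natDegree ≤ B := by
    rw [coeff_sub, coeff_X_pow, coeff_C]
    refine (natDegree_sub_le _ _).trans (max_le ?_ ?_) <;> split_ifs <;> simp [hFB]
  refine resultant_ne_zero_of_monic_of_irreducible (monic_X_pow_sub_C F hd)
    (irreducible_X_pow_sub_C_of_squarefree hd hF hF0) hS0 ?_ (hπ _ ?_ ?_)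
  · exact degree_lt_degree (by rwa [hdeg])
  · exact map_resultant_eq_zero_of_eval₂_eq_zero π (by rwa [hdeg]) (by simp [hx]) hS
  · refine (natDegree_resultant_le hcoeff hSB _ _).trans_lt ?_
    rw [hdeg, two_mul]
    gcongr
    omega

theorem eq_zero_of_eval₂_eq_zero_of_mul_pow_eq_one (hF : Squarefree F) (hF0 : 0 < F.natDegree)
    (hFB : F.natDegree ≤ B) (hπ : ∀ u, π u = 0 → u.natDegree < 2 * d * B → u = 0) {y : A}
    (hy : π F * y ^ d = 1) (hSd : S.natDegree < d) (hSB : ∀ i, (S.coeff i).natDegree ≤ B)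
    (hS : S.eval₂ π y = 0) : S = 0 := by
  obtain ⟨k, rfl⟩ : ∃ k, d = k + 1 := ⟨d - 1, by omega⟩
  let : Invertible y := ⟨π F * y ^ k, by rw [mul_assoc, ← pow_succ, hy],
    by rw [mul_left_comm, ← pow_succ', hy]⟩
  suffices hrefl : S.reflect k = 0 by rwa [reflect_eq_zero_iff] at hrefl
  refine eq_zero_of_eval₂_eq_zero_of_pow_eq π hF hF0 hFB hπ (x := ⅟y) ?_ ?_ ?_ ?_
  · rw [← invOf_pow]
    exact invOf_eq_left_inv hy
  · exact natDegree_reflect_le.trans_lt (by omega)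
  · exact fun i ↦ by rw [coeff_reflect]; exact hSB _
  · exact (eval₂_reflect_eq_zero_iff π y k S (by omega)).2 hS

end Kummer

section Nonvanishing

theorem eq_zero_of_sum_pow_mul_eq_zero {R : Type*} [CommRing R] [IsDomain R] {x : R} (hx : x ≠ 0)
    {J : ℕ} {u : Fin J → R} (hu : ∀ j, x ∣ u j → u j = 0)
    (h : ∑ j : Fin J, x ^ (j : ℕ) * u j = 0) (j : Fin J) : u j = 0 := by
  induction J with
  | zero => exact j.elim0
  | succ J ih =>
    have hsum : ∑ j : Fin (J + 1), x ^ (j : ℕ) * u j =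
        u 0 + x * ∑ j : Fin J, x ^ (j : ℕ) * u j.succ := by
      simp [Fin.sum_univ_succ, Finset.mul_sum, pow_succ', mul_assoc]
    have h0 : u 0 = 0 :=
      hu 0 ((dvd_add_left (dvd_mul_right _ _)).1 (hsum ▸ h ▸ dvd_zero x))
    rw [hsum, h0, zero_add, mul_eq_zero, or_iff_right hx] at h
    induction j using Fin.cases with
    | zero => exact h0
    | succ j => exact ih (fun j ↦ hu j.succ) h j

variable {K : Type*} [Field K] [Fintype K] {f : K[X]} {d e B : ℕ}

theorem X_pow_dvd_pow_card_sub_C (f : K[X]) :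
    X ^ Fintype.card K ∣ f ^ Fintype.card K - C (f.coeff 0) := by
  have hX : X ∣ f - C (f.coeff 0) := X_dvd_iff.2 (by simp)
  simpa only [map_sub, FiniteField.expand_card, expand_C, expand_X] using
    map_dvd (expand K (Fintype.card K)) hX

theorem eq_zero_of_X_pow_dvd_eval_pow (hf : Squarefree f) (hf0 : 0 < f.natDegree)
    (hc : f.coeff 0 ≠ 0) (hde : d * e + 1 = Fintype.card K) (hfB : f.natDegree ≤ B)
    (hB : 2 * d * B ≤ Fintype.card K) {S : K[X][X]} (hSd : S.natDegree < d)
    (hSB : ∀ i, (S.coeff i).natDegree ≤ B)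
    (hS : X ^ Fintype.card K ∣ S.eval (f ^ e)) : S = 0 := by
  set c := f.coeff 0
  have hass : Associated f (C c⁻¹ * f) := by
    rw [mul_comm]
    exact associated_mul_unit_right f _ (isUnit_C.2 (inv_ne_zero hc).isUnit)
  have hdeg : (C c⁻¹ * f).natDegree = f.natDegree := natDegree_C_mul (inv_ne_zero hc)
  set π := Ideal.Quotient.mk (Ideal.span {(X : K[X]) ^ Fintype.card K})
  have hπ (u : K[X]) : π u = 0 ↔ X ^ Fintype.card K ∣ u := by
    rw [Ideal.Quotient.eq_zero_iff_mem, Ideal.mem_span_singleton]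
  refine eq_zero_of_eval₂_eq_zero_of_mul_pow_eq_one π (hass.squarefree_iff.1 hf)
    (by rwa [hdeg]) (by rwa [hdeg]) (fun u hu hdeg ↦ ?_) (y := π (f ^ e)) ?_ hSd hSB ?_
  · by_contra hu0
    have := natDegree_le_of_dvd ((hπ u).1 hu) hu0
    rw [natDegree_X_pow] at this
    omega
  · have hpow : C c⁻¹ * f * (f ^ e) ^ d - 1 = C c⁻¹ * (f ^ Fintype.card K - C c) := by
      rw [mul_sub, ← C_mul, inv_mul_cancel₀ hc, C_1, ← hde]
      ring
    rw [← map_pow, ← map_mul, ← sub_eq_zero, ← map_one π, ← map_sub, hπ, hpow]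
    exact (X_pow_dvd_pow_card_sub_C f).mul_left _
  · rwa [eval₂_at_apply, hπ]

theorem eq_zero_of_X_pow_dvd_sum_mul_pow (hf : Squarefree f) (hf0 : 0 < f.natDegree)
    (hc : f.coeff 0 ≠ 0) (hde : d * e + 1 = Fintype.card K) (hfB : f.natDegree ≤ B)
    (hB : 2 * d * B ≤ Fintype.card K) {r : Fin d → K[X]} (hr : ∀ i, (r i).natDegree ≤ B)
    (hdvd : X ^ Fintype.card K ∣ ∑ i, r i * (f ^ e) ^ (i : ℕ)) : r = 0 := by
  classical
  rcases Nat.eq_zero_or_pos d with rfl | hd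
  · exact Subsingleton.elim _ _
  refine injective_ofFn d (Eq.trans ?_ (ofFn_zero d).symm)
  refine eq_zero_of_X_pow_dvd_eval_pow hf hf0 hc hde hfB hB (ofFn_natDegree_lt hd r) (fun i ↦ ?_) ?_
  · rcases lt_or_ge i d with hi | hi
    · rw [ofFn_coeff_eq_val_of_lt r hi]
      exact hr _
    · simp [ofFn_coeff_eq_zero_of_ge r hi]
  · simpa [ofFn_eq_sum_monomial, eval_finsetSum] using hdvd

end Nonvanishing

section TwistedDerivative

variable {R : Type*} [CommRing R]

/-- The operator `T` with `(r * f ^ M)⁽ᵏ⁾ = T r * f ^ (M - k)` for `k ≤ M`: it strips the power of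
`f` from iterated derivatives of multiples of `f ^ M`. -/
def twistedDerivative (f : R[X]) (M : ℕ) : ℕ → R[X] →ₗ[R] R[X]
  | 0 => LinearMap.id
  | k + 1 => LinearMap.mulLeft R (((M - k : ℕ) : R[X]) * derivative f) ∘ₗ twistedDerivative f M k +
      LinearMap.mulLeft R f ∘ₗ derivative ∘ₗ twistedDerivative f M k

theorem twistedDerivative_succ (f : R[X]) (M k : ℕ) (r : R[X]) :
    twistedDerivative f M (k + 1) r = (M - k : ℕ) * derivative f * twistedDerivative f M k r +
      f * derivative (twistedDerivative f M k r) := rfl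

theorem natDegree_twistedDerivative_le (f : R[X]) (M k : ℕ) (r : R[X]) :
    (twistedDerivative f M k r).natDegree ≤ r.natDegree + k * f.natDegree := by
  induction k with
  | zero => simp [twistedDerivative]
  | succ k ih =>
    rw [twistedDerivative_succ, mul_assoc]
    refine natDegree_add_le_of_degree_le ?_ ?_
    · have h := natDegree_mul_le (p := derivative f) (q := twistedDerivative f M k r)
      have hf := natDegree_derivative_le f
      grw [natDegree_mul_le, natDegree_natCast, h, hf, ih]
      lia
    · grw [natDegree_mul_le, natDegree_derivative_le, ih]
      lia

theorem iterate_derivative_mul_pow_mul {f w : R[X]} (hw : derivative w = 0) {M k : ℕ} (hk : k ≤ M)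
    (r : R[X]) :
    derivative^[k] (r * f ^ M * w) = twistedDerivative f M k r * f ^ (M - k) * w := by
  induction k with
  | zero => simp [twistedDerivative]
  | succ k ih =>
    obtain ⟨u, hu⟩ : ∃ u, M - k = u + 1 := ⟨M - (k + 1), by omega⟩
    rw [Function.iterate_succ_apply', ih (by omega), twistedDerivative_succ, hu,
      show M - (k + 1) = u by omega, derivative_mul, derivative_mul, hw, derivative_pow]
    simp only [Nat.add_sub_cancel, map_natCast]
    ring

end TwistedDerivative

section Stepanov

theorem exists_ne_zero_forall_apply_eq_zero {K ι κ : Type*} [Field K] [Fintype ι] [Fintype κ]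
    {B N : ℕ} (Q : κ → (ι → K[X]) →ₗ[K] K[X])
    (hQ : ∀ k v, (∀ i, (v i).natDegree ≤ B) → (Q k v).natDegree < N)
    (hN : Fintype.card κ * N < Fintype.card ι * (B + 1)) :
    ∃ v ≠ 0, (∀ i, (v i).natDegree ≤ B) ∧ ∀ k, Q k v = 0 := by
  let W := degreeLT K (B + 1)
  let incl : (ι → W) →ₗ[K] ι → K[X] := W.subtype.compLeft ι
  let Φ : (ι → W) →ₗ[K] κ × Fin N → K := LinearMap.pi fun kn ↦ lcoeff K kn.2 ∘ₗ Q kn.1 ∘ₗ incl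
  have : Module.Finite K W := .of_basis (degreeLT.basis K (B + 1))
  have hW : Module.finrank K W = B + 1 := by
    simpa using Module.finrank_eq_card_basis (degreeLT.basis K (B + 1))
  have hker : LinearMap.ker Φ ≠ ⊥ :=
    LinearMap.ker_ne_bot_of_finrank_lt (by simpa [Module.finrank_pi_fintype, hW] using hN)
  obtain ⟨v, hv, hv0⟩ := Submodule.exists_mem_ne_zero_of_ne_bot hker
  have hdeg (i : ι) : (incl v i).natDegree ≤ B :=
    natDegree_le_of_degree_le (Order.le_of_lt_succ (mem_degreeLT.1 (v i).2))
  refine ⟨incl v, fun h ↦ hv0 (funext fun i ↦ Subtype.ext (congrFun h i)), hdeg, fun k ↦ ?_⟩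
  ext n
  by_cases hn : n < N
  · exact congrFun (LinearMap.mem_ker.1 hv) (k, ⟨n, hn⟩)
  · exact coeff_eq_zero_of_natDegree_lt ((hQ k _ hdeg).trans_le (not_lt.1 hn))

theorem mul_card_le_natDegree {R : Type*} [CommRing R] [IsDomain R] {P : R[X]} {l : ℕ}
    {s : Finset R} (h : ∀ x ∈ s, l ≤ P.rootMultiplicity x) : l * s.card ≤ P.natDegree := by
  classical
  have hle : l • s.val ≤ P.roots := by
    rw [Multiset.le_iff_count]
    intro x
    rw [Multiset.count_nsmul, count_roots, Multiset.count_eq_of_nodup s.nodup]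
    split_ifs with hx
    · simpa using h x hx
    · simp
  simpa using (Multiset.card_le_card hle).trans (card_roots' P)

variable {K : Type*} [Field K] {f : K[X]} {d e l J B : ℕ} {v : Fin d × Fin J → K[X]}

/-- Stepanov's auxiliary polynomial over a field with `q` elements, built from the unknown
polynomials `v (i, j)`. Where `f ^ e` takes the value `a`, its derivatives of order `k < l` are
controlled by `stepanovDerivative f l e a k v`. -/
def stepanovPoly (f : K[X]) (l e q : ℕ) (v : Fin d × Fin J → K[X]) : K[X] :=
  ∑ ij, v ij * f ^ (l + e * ij.1) * X ^ (q * ij.2)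

/-- The polynomial, linear in `v`, obtained from the `k`-th derivative of `stepanovPoly f l e q v`
on replacing `f ^ e` by `a` and `X ^ q` by `X`, and dividing by `f ^ (l - k)`. -/
def stepanovDerivative (f : K[X]) (l e : ℕ) (a : K) (k : ℕ) :
    (Fin d × Fin J → K[X]) →ₗ[K] K[X] :=
  ∑ ij : Fin d × Fin J, LinearMap.mulLeft K (C (a ^ (ij.1 : ℕ)) * X ^ (ij.2 : ℕ)) ∘ₗ
    twistedDerivative f (l + e * ij.1) k ∘ₗ LinearMap.proj ij

theorem stepanovDerivative_apply (a : K) (k : ℕ) :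
    stepanovDerivative f l e a k v = ∑ ij : Fin d × Fin J,
      C (a ^ (ij.1 : ℕ)) * X ^ (ij.2 : ℕ) * twistedDerivative f (l + e * ij.1) k (v ij) := by
  simp [stepanovDerivative, mul_assoc]

theorem natDegree_stepanovDerivative_lt (hJ : 0 < J) (hv : ∀ ij, (v ij).natDegree ≤ B) {a : K}
    {k : ℕ} (hk : k ≤ l) :
    (stepanovDerivative f l e a k v).natDegree < J + B + l * f.natDegree := by
  rw [stepanovDerivative_apply]
  refine Nat.lt_of_le_pred (by omega) (natDegree_sum_le_of_forall_le _ _ fun ij _ ↦ ?_)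
  have hj := ij.2.2
  have hX := natDegree_C_mul_X_pow_le (a ^ (ij.1 : ℕ)) (ij.2 : ℕ)
  have hk := Nat.mul_le_mul_right f.natDegree hk
  grw [natDegree_mul_le, hX, natDegree_twistedDerivative_le, hv ij]
  rw [Nat.pred_eq_sub_one]
  omega

theorem natDegree_stepanovPoly_le {q : ℕ} (hde : d * e ≤ q) (hv : ∀ ij, (v ij).natDegree ≤ B) :
    (stepanovPoly f l e q v).natDegree ≤ l * f.natDegree + B + q * f.natDegree + J * q := by
  refine natDegree_sum_le_of_forall_le _ _ fun ij _ ↦ ?_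
  have hi : e * (ij.1 : ℕ) ≤ q := by
    grw [ij.1.2.le, mul_comm, hde]
  have hj : (ij.2 : ℕ) ≤ J := ij.2.2.le
  grw [natDegree_mul_le, natDegree_mul_le, natDegree_pow_le, natDegree_X_pow, hi, hj, hv ij]
  exact le_of_eq (by ring)

theorem eval_iterate_derivative_stepanovPoly [Fintype K] {x a : K} (hx : f.eval x ^ e = a) {k : ℕ}
    (hk : k ≤ l) :
    (derivative^[k] (stepanovPoly f l e (Fintype.card K) v)).eval x =
      f.eval x ^ (l - k) * (stepanovDerivative f l e a k v).eval x := by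
  rw [stepanovPoly, iterate_derivative_sum, stepanovDerivative_apply, eval_finsetSum,
    eval_finsetSum, Finset.mul_sum]
  refine Finset.sum_congr rfl fun ij _ ↦ ?_
  rw [iterate_derivative_mul_pow_mul (by simp [derivative_X_pow]) (by omega),
    show l + e * (ij.1 : ℕ) - k = l - k + e * ij.1 by omega]
  simp only [eval_mul, eval_pow, eval_C, eval_X, pow_add, pow_mul, hx, FiniteField.pow_card]
  ring

theorem stepanovPoly_ne_zero [Fintype K] (hf : Squarefree f) (hf0 : 0 < f.natDegree)
    (hc : f.coeff 0 ≠ 0) (hde : d * e + 1 = Fintype.card K) (hfB : f.natDegree ≤ B)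
    (hB : 2 * d * B ≤ Fintype.card K) (hv : v ≠ 0) (hvB : ∀ ij, (v ij).natDegree ≤ B) :
    stepanovPoly f l e (Fintype.card K) v ≠ 0 := by
  intro h0
  have hblock (j : Fin J) (h : X ^ Fintype.card K ∣ ∑ i, v (i, j) * (f ^ e) ^ (i : ℕ)) (i : Fin d) :
      v (i, j) = 0 :=
    congrFun (eq_zero_of_X_pow_dvd_sum_mul_pow hf hf0 hc hde hfB hB (fun i ↦ hvB (i, j)) h) i
  have hsum : stepanovPoly f l e (Fintype.card K) v =
      f ^ l * ∑ j : Fin J, (X ^ Fintype.card K) ^ (j : ℕ) *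
        ∑ i : Fin d, v (i, j) * (f ^ e) ^ (i : ℕ) := by
    simp only [stepanovPoly, Fintype.sum_prod_type_right, Finset.mul_sum, pow_add, pow_mul]
    exact Finset.sum_congr rfl fun j _ ↦ Finset.sum_congr rfl fun i _ ↦ by ring
  rw [hsum, mul_eq_zero, or_iff_right (pow_ne_zero l hf.ne_zero)] at h0
  have hzero := eq_zero_of_sum_pow_mul_eq_zero (pow_ne_zero _ X_ne_zero)
    (fun j h ↦ Finset.sum_eq_zero fun i _ ↦ by rw [hblock j h i, zero_mul]) h0
  exact hv (funext fun ij ↦ hblock ij.2 (hzero ij.2 ▸ dvd_zero _) ij.1)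

theorem le_rootMultiplicity_stepanovPoly [Fintype K] {x a : K} (hx : f.eval x ^ e = a)
    (hl : ((l - 1).factorial : K) ≠ 0) (h0 : stepanovPoly f l e (Fintype.card K) v ≠ 0)
    (hv : ∀ k < l, stepanovDerivative f l e a k v = 0) :
    l ≤ (stepanovPoly f l e (Fintype.card K) v).rootMultiplicity x := by
  rcases l with _ | l
  · exact Nat.zero_le _
  refine lt_rootMultiplicity_of_isRoot_iterate_derivative_of_mem_nonZeroDivisors h0
    (fun k hk ↦ ?_) (mem_nonZeroDivisors_of_ne_zero hl)
  rw [IsRoot.def, eval_iterate_derivative_stepanovPoly hx (by omega), hv k (by omega), eval_zero,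
    mul_zero]

theorem mul_card_filter_eval_pow_eq_le [Fintype K] [DecidableEq K] (hf : Squarefree f)
    (hf0 : 0 < f.natDegree) (hc : f.coeff 0 ≠ 0) (hde : d * e + 1 = Fintype.card K)
    (hfB : f.natDegree ≤ B) (hB : 2 * d * B ≤ Fintype.card K)
    (hl : ((l - 1).factorial : K) ≠ 0)
    (hcount : l * (J + B + l * f.natDegree) < d * J * (B + 1)) (a : K) :
    l * (Finset.univ.filter fun x ↦ f.eval x ^ e = a).card ≤
      l * f.natDegree + B + Fintype.card K * f.natDegree + J * Fintype.card K := by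
  have hJ : 0 < J := Nat.pos_of_ne_zero fun h ↦ by simp [h] at hcount
  obtain ⟨v, hv0, hvB, hv⟩ := exists_ne_zero_forall_apply_eq_zero
    (fun k : Fin l ↦ stepanovDerivative (d := d) (J := J) f l e a k)
    (fun k v hv ↦ natDegree_stepanovDerivative_lt hJ hv k.2.le) (by simpa using hcount)
  have hP0 := stepanovPoly_ne_zero (l := l) hf hf0 hc hde hfB hB hv0 hvB
  refine (mul_card_le_natDegree fun x hx ↦ ?_).trans
    (natDegree_stepanovPoly_le (Nat.le_of_succ_le hde.le) hvB)
  exact le_rootMultiplicity_stepanovPoly (Finset.mem_filter.1 hx).2 hl hP0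
    fun k hk ↦ hv ⟨k, hk⟩

end Stepanov

section CharacterSums

/-- The excess `J - ⌊√p⌋` in Stepanov's method for the exponent `d` and degrees at most `D`, large
enough for the unknown coefficients to outnumber the vanishing conditions. -/
def stepanovExcess (d D : ℕ) : ℕ := 2 * d * (2 + d * D)

theorem degree_lt_stepanovExcess {d : ℕ} (hd : 0 < d) (D : ℕ) : D < stepanovExcess d D := by
  rw [stepanovExcess]
  nlinarith [Nat.mul_le_mul hd hd, Nat.zero_le D]

theorem two_mul_mul_degree_le_stepanovExcess {d : ℕ} (hd : 0 < d) (D : ℕ) :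
    2 * d * D ≤ stepanovExcess d D :=
  Nat.mul_le_mul_left _ ((Nat.le_mul_of_pos_left D hd).trans (Nat.le_add_left _ _))

theorem exponent_le_stepanovExcess (d D : ℕ) : d ≤ stepanovExcess d D := by
  rw [stepanovExcess]
  nlinarith [Nat.zero_le (d * (d * D))]

theorem stepanov_conditions_lt_unknowns {d D m p : ℕ} (hd : 0 < d) (hm : m ≤ D)
    (hp : stepanovExcess d D ≤ p.sqrt) (hp0 : 0 < p) :
    d * p.sqrt * (p.sqrt + stepanovExcess d D + p / (2 * d) + d * p.sqrt * m) <
      d * (p.sqrt + stepanovExcess d D) * (p / (2 * d) + 1) := by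
  set K := p.sqrt
  set t := stepanovExcess d D with ht
  set B := p / (2 * d)
  have hpB : p < 2 * d * (B + 1) := Nat.lt_mul_div_succ p (by omega)
  have hmain : K * (K + t + d * K * m) < t * (B + 1) := calc
    K * (K + t + d * K * m) ≤ K * (K + K + d * K * D) := by gcongr
    _ = K * K * (2 + d * D) := by ring
    _ ≤ p * (2 + d * D) := by gcongr; exact p.sqrt_le
    _ < 2 * d * (B + 1) * (2 + d * D) := by gcongr
    _ = t * (B + 1) := by rw [ht, stepanovExcess]; ring
  calc d * K * (K + t + B + d * K * m) = d * (K * (K + t + d * K * m) + K * B) := by ring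
    _ < d * (t * (B + 1) + K * (B + 1)) := by gcongr; omega
    _ = d * (K + t) * (B + 1) := by ring

variable {p : ℕ} [Fact p.Prime] {d D e : ℕ} {f : (ZMod p)[X]}

theorem natCast_factorial_ne_zero {k : ℕ} (hk : k < p) : (k.factorial : ZMod p) ≠ 0 := by
  rw [Ne, ZMod.natCast_eq_zero_iff, (Fact.out : p.Prime).dvd_factorial]
  exact hk.not_ge

theorem mul_card_filter_eval_pow_eq_le_of_coeff_zero_ne_zero (hf : Squarefree f)
    (hf0 : 0 < f.natDegree) (hfD : f.natDegree ≤ D) (hc : f.coeff 0 ≠ 0) (hd : 0 < d)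
    (hde : d * e + 1 = p) (hp : stepanovExcess d D ≤ p.sqrt) (a : ZMod p) :
    d * (Finset.univ.filter fun x ↦ f.eval x ^ e = a).card ≤
      p + d * D + 3 * p.sqrt * (1 + D + stepanovExcess d D) := by
  set K := p.sqrt
  set t := stepanovExcess d D
  have hp0 : 0 < p := (Fact.out : p.Prime).pos
  have hKp : K * K ≤ p := p.sqrt_le
  have hpK : p ≤ K * K + K + K := p.sqrt_le_add
  have hdt : d ≤ t := exponent_le_stepanovExcess d D
  have hK0 : 0 < K := hd.trans_le (hdt.trans hp)
  have hfB : f.natDegree ≤ p / (2 * d) := by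
    rw [Nat.le_div_iff_mul_le (by omega), mul_comm]
    calc 2 * d * f.natDegree ≤ 2 * d * D := by gcongr
      _ ≤ t := two_mul_mul_degree_le_stepanovExcess hd D
      _ ≤ p := hp.trans p.sqrt_le_self
  have hl : ((d * K - 1).factorial : ZMod p) ≠ 0 := by
    refine natCast_factorial_ne_zero ?_
    have : d * K ≤ K * K := Nat.mul_le_mul_right _ (hdt.trans hp)
    omega
  have hcount := mul_card_filter_eval_pow_eq_le hf hf0 hc (by rw [hde, ZMod.card]) hfB
    (by rw [ZMod.card]; exact Nat.mul_div_le p _) hl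
    (stepanov_conditions_lt_unknowns hd hfD hp hp0) a
  rw [ZMod.card] at hcount
  set N := (Finset.univ.filter fun x ↦ f.eval x ^ e = a).card
  refine Nat.le_of_mul_le_mul_left ?_ hK0
  calc K * (d * N) = d * K * N := by ring
    _ ≤ d * K * D + p + p * D + (K + t) * p := by
      grw [hcount, hfD, Nat.div_le_self]
    _ = K * (p + d * D) + p * (1 + D + t) := by ring
    _ ≤ K * (p + d * D) + 3 * K * K * (1 + D + t) := by gcongr; nlinarith
    _ = _ := by ring

theorem squarefree_taylor {R : Type*} [CommRing R] {g : R[X]} (hg : Squarefree g) (r : R) :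
    Squarefree (taylor r g) := by
  intro q hq
  rw [← MulEquiv.isUnit_map (taylorEquiv r).symm]
  refine hg _ ?_
  rwa [← map_mul, ← map_dvd_iff (taylorEquiv r), AlgEquiv.apply_symm_apply]

theorem mul_card_filter_eval_pow_eq_le_add_sqrt (hf : Squarefree f)
    (hf0 : 0 < f.natDegree) (hfD : f.natDegree ≤ D) (hd : 0 < d)
    (hde : d * e + 1 = p) (hp : stepanovExcess d D ≤ p.sqrt) (a : ZMod p) :
    d * (Finset.univ.filter fun x ↦ f.eval x ^ e = a).card ≤
      p + d * D + 3 * p.sqrt * (1 + D + stepanovExcess d D) := by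
  obtain ⟨b, hb⟩ : ∃ b : ZMod p, f.eval b ≠ 0 := by
    by_contra! h
    refine ne_zero_of_natDegree_gt hf0
      (eq_zero_of_natDegree_lt_card_of_eval_eq_zero' f Finset.univ (fun x _ ↦ h x) ?_)
    rw [Finset.card_univ, ZMod.card]
    exact hfD.trans_lt ((degree_lt_stepanovExcess hd D).trans_le (hp.trans p.sqrt_le_self))
  have hcard : (Finset.univ.filter fun x ↦ (taylor b f).eval x ^ e = a).card =
      (Finset.univ.filter fun x ↦ f.eval x ^ e = a).card :=
    Finset.card_equiv (Equiv.addRight b) fun x ↦ by simp [taylor_eval]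
  rw [← hcard]
  exact mul_card_filter_eval_pow_eq_le_of_coeff_zero_ne_zero (squarefree_taylor hf b)
    (by rwa [natDegree_taylor]) (by rwa [natDegree_taylor]) (by rwa [taylor_coeff_zero]) hd hde hp a

theorem sum_nthRootsFinset_one_eq_zero {R : Type*} [CommRing R] [IsDomain R] {ζ : R} {d : ℕ}
    (hζ : IsPrimitiveRoot ζ d) (hd : 1 < d) : ∑ z ∈ nthRootsFinset d (1 : R), z = 0 := by
  classical
  rw [nthRootsFinset_def, Finset.sum, Multiset.toFinset_val, hζ.nthRoots_one_nodup.dedup,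
    hζ.nthRoots_eq (one_pow d), Multiset.map_map]
  simpa [Finset.sum] using hζ.geom_sum_eq_zero hd

theorem norm_sum_le_of_mul_card_filter_le {ι : Type*} {s : Finset ι} {φ : ι → ℂ} {d : ℕ} {M : ℝ}
    (hd : 2 ≤ d) (hφ : ∀ i ∈ s, φ i ^ d = 1) (hM : ∀ z, d * ((s.filter (φ · = z)).card : ℝ) ≤ M) :
    ‖∑ i ∈ s, φ i‖ ≤ M - s.card := by
  have hζ := Complex.isPrimitiveRoot_exp d (by omega)
  set Ω := nthRootsFinset d (1 : ℂ)
  set N : ℂ → ℕ := fun z ↦ (s.filter (φ · = z)).card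
  have hmaps : ∀ i ∈ s, φ i ∈ Ω := fun i hi ↦ (mem_nthRootsFinset (by omega) 1).2 (hφ i hi)
  have hΩ : ∑ z ∈ Ω, z = 0 := sum_nthRootsFinset_one_eq_zero hζ (by omega)
  have hd0 : (d : ℝ) ≠ 0 := by positivity
  have hsum : ∑ i ∈ s, φ i = ∑ z ∈ Ω, ((N z : ℝ) - M / d : ℝ) * z := by
    rw [← Finset.sum_fiberwise_of_maps_to hmaps]
    push_cast
    simp only [sub_mul]
    rw [Finset.sum_sub_distrib, ← Finset.mul_sum, hΩ, mul_zero, sub_zero]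
    refine Finset.sum_congr rfl fun z _ ↦ ?_
    rw [Finset.sum_congr rfl fun i hi ↦ (Finset.mem_filter.1 hi).2, Finset.sum_const, nsmul_eq_mul]
  have hnorm (z : ℂ) (hz : z ∈ Ω) : ‖(((N z : ℝ) - M / d : ℝ) : ℂ) * z‖ = M / d - N z := by
    have hz1 : ‖z‖ = 1 :=
      Complex.norm_eq_one_of_pow_eq_one ((mem_nthRootsFinset (by omega) 1).1 hz) (by omega)
    have hNz : N z ≤ M / d := by
      rw [le_div_iff₀' (by positivity)]
      exact hM z
    rw [norm_mul, hz1, mul_one, Complex.norm_real, Real.norm_eq_abs, abs_sub_comm,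
      abs_of_nonneg (sub_nonneg.2 hNz)]
  calc ‖∑ i ∈ s, φ i‖ ≤ ∑ z ∈ Ω, (M / d - N z) := by
        rw [hsum, ← Finset.sum_congr rfl hnorm]
        exact norm_sum_le _ _
    _ = M - s.card := by
        rw [Finset.sum_sub_distrib, Finset.sum_const, hζ.card_nthRootsFinset, nsmul_eq_mul,
          mul_div_cancel₀ _ hd0, Finset.card_eq_sum_card_fiberwise hmaps, Nat.cast_sum]

theorem pow_eq_one_of_mulChar_apply_eq_one {F R : Type*} [Field F] [Fintype F]
    [CommMonoidWithZero R] {χ : MulChar F R} {e : ℕ} (he : orderOf χ * e + 1 = Fintype.card F)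
    {z : Fˣ} (hz : χ z = 1) : z ^ e = 1 := by
  classical
  obtain ⟨γ, hγ⟩ := IsCyclic.exists_generator (α := Fˣ)
  have hpow (y : Fˣ) : ∃ j, γ ^ j = y := mem_powers_iff_mem_zpowers.2 (hγ y)
  obtain ⟨k, rfl⟩ := hpow z
  have hχk : χ ^ k = 1 := by
    ext y
    obtain ⟨j, rfl⟩ := hpow y
    rw [MulChar.pow_apply_coe, MulChar.one_apply_coe, ← map_pow, ← Units.val_pow_eq_pow_val,
      pow_right_comm, Units.val_pow_eq_pow_val, map_pow, hz, one_pow]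
  obtain ⟨j, rfl⟩ := orderOf_dvd_of_pow_eq_one hχk
  have hcard : Fintype.card Fˣ = orderOf χ * e := by
    rw [Fintype.card_units, ← he, Nat.add_sub_cancel]
  rw [← pow_mul, mul_right_comm, pow_mul, ← hcard, pow_card_eq_one, one_pow]

theorem pow_eq_pow_of_mulChar_apply_eq {F R : Type*} [Field F] [Fintype F]
    [CommMonoidWithZero R] {χ : MulChar F R} {e : ℕ} (he : orderOf χ * e + 1 = Fintype.card F)
    {a b : F} (ha : a ≠ 0) (hb : b ≠ 0) (hab : χ a = χ b) : a ^ e = b ^ e := by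
  lift a to Fˣ using ha.isUnit
  lift b to Fˣ using hb.isUnit
  have hone : χ (a / b : Fˣ) = 1 := by
    rw [div_eq_mul_inv, Units.val_mul, map_mul, hab, ← map_mul, Units.mul_inv, map_one]
  have hpow := pow_eq_one_of_mulChar_apply_eq_one he hone
  rw [div_pow, div_eq_one] at hpow
  exact congrArg Units.val hpow

/-- An admissible constant in Weil's bound `O(√p)` for the sum of `χ (f x)`, where `χ` has order `d`
and `f` has degree at most `D`. -/
def weilConstant (d D : ℕ) : ℝ := d * D + D + 3 * (1 + D + stepanovExcess d D)

theorem card_sub_natDegree_le_card_filter_eval_ne_zero {F : Type*} [Field F] [Fintype F]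
    [DecidableEq F] {g : F[X]} (hg : g ≠ 0) :
    (Fintype.card F : ℝ) - g.natDegree ≤ (Finset.univ.filter fun x ↦ g.eval x ≠ 0).card := by
  have hroots : (Finset.univ.filter fun x ↦ ¬g.eval x ≠ 0).card ≤ g.natDegree :=
    card_le_degree_of_subset_roots fun x hx ↦ (mem_roots hg).2 (by simpa using hx)
  have hcard := Finset.card_filter_add_card_filter_not (s := Finset.univ) fun x ↦ g.eval x ≠ 0
  rw [Finset.card_univ] at hcard
  rw [← hcard, sub_le_iff_le_add]
  exact_mod_cast Nat.add_le_add_left hroots _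

theorem mul_card_filter_mulChar_eval_eq_le {χ : MulChar (ZMod p) ℂ} (hf : Squarefree f)
    (hf0 : 0 < f.natDegree) (hfD : f.natDegree ≤ D) (hp : stepanovExcess (orderOf χ) D ≤ p.sqrt)
    (z : ℂ) :
    orderOf χ * ((Finset.univ.filter fun x ↦ f.eval x ≠ 0).filter fun x ↦ χ (f.eval x) = z).card ≤
      p + orderOf χ * D + 3 * p.sqrt * (1 + D + stepanovExcess (orderOf χ) D) := by
  set S := (Finset.univ.filter fun x ↦ f.eval x ≠ 0).filter fun x ↦ χ (f.eval x) = z with hS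
  obtain ⟨e, he⟩ := χ.orderOf_dvd_card_sub_one
  rw [ZMod.card] at he
  have he' : orderOf χ * e + 1 = p := by have := (Fact.out : p.Prime).pos; omega
  rcases S.eq_empty_or_nonempty with hempty | ⟨b, hb⟩
  · simp [hempty]
  · refine le_trans (Nat.mul_le_mul_left _ (Finset.card_le_card fun x hx ↦ ?_))
      (mul_card_filter_eval_pow_eq_le_add_sqrt hf hf0 hfD χ.orderOf_pos he' hp (f.eval b ^ e))
    simp only [hS, Finset.mem_filter, Finset.mem_univ, true_and] at hx hb ⊢
    exact pow_eq_pow_of_mulChar_apply_eq (by rw [he', ZMod.card]) hx.1 hb.1 (hx.2.trans hb.2.symm)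

theorem norm_sum_mulChar_eval_le_of_stepanovExcess_le {χ : MulChar (ZMod p) ℂ}
    (hχ : 2 ≤ orderOf χ) (hf : Squarefree f) (hf0 : 0 < f.natDegree) (hfD : f.natDegree ≤ D)
    (hp : stepanovExcess (orderOf χ) D ≤ p.sqrt) :
    ‖∑ x, χ (f.eval x)‖ ≤
      orderOf χ * D + D + 3 * p.sqrt * (1 + D + stepanovExcess (orderOf χ) D) := by
  have hS : ∑ x, χ (f.eval x) = ∑ x with f.eval x ≠ 0, χ (f.eval x) := by
    rw [Finset.sum_filter_of_ne]
    intro x _ hx h0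
    exact hx (by rw [h0, χ.map_zero])
  have hpow : ∀ x ∈ Finset.univ.filter fun x ↦ f.eval x ≠ 0, χ (f.eval x) ^ orderOf χ = 1 := by
    intro x hx
    rw [← MulChar.pow_apply' χ (by omega), pow_orderOf_eq_one,
      MulChar.one_apply (Finset.mem_filter.1 hx).2.isUnit]
  have hcard := card_sub_natDegree_le_card_filter_eval_ne_zero (ne_zero_of_natDegree_gt hf0)
  rw [ZMod.card] at hcard
  have hfD' : (f.natDegree : ℝ) ≤ D := by exact_mod_cast hfD
  rw [hS]
  refine (norm_sum_le_of_mul_card_filter_le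
    (M := p + orderOf χ * D + 3 * p.sqrt * (1 + D + stepanovExcess (orderOf χ) D))
    hχ hpow fun z ↦ ?_).trans ?_
  · exact_mod_cast mul_card_filter_mulChar_eval_eq_le hf hf0 hfD hp z
  · linarith

theorem norm_sum_mulChar_eval_le_card (χ : MulChar (ZMod p) ℂ) (f : (ZMod p)[X]) :
    ‖∑ x, χ (f.eval x)‖ ≤ p := by
  simpa using norm_sum_le_of_le Finset.univ fun x _ ↦ DirichletCharacter.norm_le_one χ (f.eval x)

theorem norm_sum_mulChar_eval_le {χ : MulChar (ZMod p) ℂ} (hχ : 2 ≤ orderOf χ)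
    (hf : Squarefree f) (hf0 : 0 < f.natDegree) (hfD : f.natDegree ≤ D) :
    ‖∑ x, χ (f.eval x)‖ ≤ weilConstant (orderOf χ) D * √p := by
  have hsqrt : (1 : ℝ) ≤ √p := by
    rw [Real.one_le_sqrt]
    exact_mod_cast (Fact.out : p.Prime).one_le
  rw [weilConstant]
  rcases le_or_gt (stepanovExcess (orderOf χ) D) p.sqrt with hp | hp
  · refine (norm_sum_mulChar_eval_le_of_stepanovExcess_le hχ hf hf0 hfD hp).trans ?_
    rw [add_mul]
    gcongr ?_ + ?_
    · exact le_mul_of_one_le_right (by positivity) hsqrt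
    · rw [mul_right_comm]
      gcongr
      exact Real.nat_sqrt_le_real_sqrt
  · have hp' : √p ≤ stepanovExcess (orderOf χ) D := by
      rw [Real.sqrt_le_left (by positivity)]
      exact_mod_cast (Nat.sqrt_lt'.1 hp).le
    calc ‖∑ x, χ (f.eval x)‖ ≤ √p * √p := by
          rw [Real.mul_self_sqrt (by positivity)]
          exact norm_sum_mulChar_eval_le_card χ f
      _ ≤ _ := by
          gcongr
          have : (0 : ℝ) ≤ orderOf χ * D := by positivity
          have : (0 : ℝ) ≤ D := by positivity
          linarith

end CharacterSums

section Parseval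

variable {R : Type*} [CommRing R] [Fintype R] {ψ : AddChar R ℂ}

theorem sum_addChar_dotProduct [DecidableEq R] {ι : Type*} [Fintype ι] [DecidableEq ι]
    (hψ : ψ.IsPrimitive) (z : ι → R) :
    ∑ u : ι → R, ψ (u ⬝ᵥ z) = if z = 0 then (Fintype.card (ι → R) : ℂ) else 0 := by
  classical
  let Ψ : AddChar (ι → R) ℂ := ψ.compAddMonoidHom
    { toFun := (· ⬝ᵥ z)
      map_zero' := zero_dotProduct z
      map_add' := fun u v ↦ add_dotProduct u v z }
  have hΨ : Ψ = 0 ↔ z = 0 := by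
    refine ⟨fun h ↦ funext fun i ↦ ?_, fun h ↦ ?_⟩
    · by_contra hi
      refine hψ hi (DFunLike.ext _ _ fun a ↦ ?_)
      simpa [Ψ, mul_comm] using DFunLike.congr_fun h (Pi.single i a)
    · ext u
      simp [Ψ, h]
  rw [← if_congr hΨ rfl rfl]
  exact Ψ.sum_eq_ite

theorem sum_norm_sq_sum_mul_addChar {ι : Type*} [Fintype ι] [DecidableEq ι] (hψ : ψ.IsPrimitive)
    (G : (ι → R) → ℂ) :
    ∑ u, ‖∑ x, G x * ψ (u ⬝ᵥ x)‖ ^ 2 = Fintype.card (ι → R) * ∑ x, ‖G x‖ ^ 2 := by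
  classical
  have hsq (u : ι → R) : (‖∑ x, G x * ψ (u ⬝ᵥ x)‖ : ℂ) ^ 2 =
      ∑ x, ∑ y, G x * starRingEnd ℂ (G y) * ψ (u ⬝ᵥ (x - y)) := by
    rw [← Complex.mul_conj', map_sum, Finset.sum_mul_sum]
    refine Finset.sum_congr rfl fun x _ ↦ Finset.sum_congr rfl fun y _ ↦ ?_
    rw [map_mul, ← AddChar.map_neg_eq_conj, dotProduct_sub, sub_eq_add_neg, AddChar.map_add_eq_mul]
    ring
  rw [← Complex.ofReal_inj]
  push_cast
  simp only [hsq]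
  rw [Finset.sum_comm, Finset.mul_sum]
  refine Finset.sum_congr rfl fun x _ ↦ ?_
  rw [Finset.sum_comm]
  simp only [← Finset.mul_sum, sum_addChar_dotProduct hψ, sub_eq_zero, mul_ite, mul_zero]
  rw [Finset.sum_ite_eq, if_pos (Finset.mem_univ x), Complex.mul_conj', mul_comm]

theorem sum_filter_apply_zero_eq {α M : Type*} [Fintype α] [DecidableEq α] [AddCommMonoid M] {k : ℕ}
    (a : α) (F : (Fin (k + 1) → α) → M) :
    ∑ u with u 0 = a, F u = ∑ u : Fin k → α, F (Fin.cons a u) := by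
  rw [Finset.sum_filter, ← (Fin.consEquiv fun _ ↦ α).sum_comp, Fintype.sum_prod_type_right]
  simp [Fin.consEquiv]

theorem sum_filter_zero_norm_sq_eq [DecidableEq R] {k : ℕ} (hψ : ψ.IsPrimitive)
    (Φ : (Fin (k + 1) → R) → ℂ) :
    ∑ u with u 0 = 0, ‖∑ x, Φ x * ψ (u ⬝ᵥ x)‖ ^ 2 =
      Fintype.card R ^ k * ∑ y : Fin k → R, ‖∑ a, Φ (Fin.cons a y)‖ ^ 2 := by
  have hcons (u : Fin k → R) : ∑ x, Φ x * ψ (Fin.cons 0 u ⬝ᵥ x) =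
      ∑ y : Fin k → R, (∑ a, Φ (Fin.cons a y)) * ψ (u ⬝ᵥ y) := by
    rw [← (Fin.consEquiv fun _ ↦ R).sum_comp, Fintype.sum_prod_type_right]
    simp only [Finset.sum_mul]
    refine Finset.sum_congr rfl fun y _ ↦ Finset.sum_congr rfl fun a _ ↦ ?_
    simp [Fin.consEquiv, dotProduct, Fin.sum_univ_succ]
  simp only [sum_filter_apply_zero_eq, hcons]
  rw [sum_norm_sq_sum_mul_addChar hψ]
  simp

theorem sum_filter_zero_norm_sq_le [DecidableEq R] {k : ℕ} (hψ : ψ.IsPrimitive)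
    {Φ : (Fin (k + 1) → R) → ℂ} (hΦ : ∀ x, ‖Φ x‖ ≤ 1) {c T : ℝ} {Z : Finset (Fin k → R)}
    (hZ : (Z.card * Fintype.card R : ℝ) ≤ T * Fintype.card R ^ k)
    (hc : ∀ y ∉ Z, ‖∑ a, Φ (Fin.cons a y)‖ ≤ c * √(Fintype.card R)) :
    ∑ u with u 0 = 0, ‖∑ x, Φ x * ψ (u ⬝ᵥ x)‖ ^ 2 ≤
      (c ^ 2 + T) * Fintype.card R ^ (2 * k + 1) := by
  classical
  set q : ℝ := (Fintype.card R : ℝ) with hq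
  have htrivial (y : Fin k → R) : ‖∑ a, Φ (Fin.cons a y)‖ ≤ q := by
    simpa [hq] using norm_sum_le_of_le Finset.univ fun a _ ↦ hΦ (Fin.cons a y)
  have hpoint (y : Fin k → R) :
      ‖∑ a, Φ (Fin.cons a y)‖ ^ 2 ≤ c ^ 2 * q + if y ∈ Z then q ^ 2 else 0 := by
    split_ifs with hy
    · have := pow_le_pow_left₀ (norm_nonneg _) (htrivial y) 2
      nlinarith [mul_nonneg (sq_nonneg c) (Nat.cast_nonneg (α := ℝ) (Fintype.card R))]
    · have := pow_le_pow_left₀ (norm_nonneg _) (hc y hy) 2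
      rwa [mul_pow, Real.sq_sqrt (Nat.cast_nonneg _), ← add_zero (c ^ 2 * _)] at this
  rw [sum_filter_zero_norm_sq_eq hψ]
  calc q ^ k * ∑ y : Fin k → R, ‖∑ a, Φ (Fin.cons a y)‖ ^ 2
      ≤ q ^ k * ∑ y : Fin k → R, (c ^ 2 * q + if y ∈ Z then q ^ 2 else 0) := by
        gcongr with y
        exact hpoint y
    _ = q ^ k * (c ^ 2 * q * q ^ k + Z.card * q * q) := by
        simp [Finset.sum_add_distrib, hq]
        ring
    _ ≤ q ^ k * (c ^ 2 * q * q ^ k + T * q ^ k * q) := by gcongr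
    _ = (c ^ 2 + T) * q ^ (2 * k + 1) := by ring

end Parseval

section DerivResultant

/-- The resultant of `f` with its derivative in formal degrees `(m, m - 1)`, `m = f.natDegree`.
Up to sign it is the discriminant of `f` times the leading coefficient, so that for
`m ≠ 0` a ring homomorphism to a field keeps it nonzero exactly if it preserves the degree of `f`
and maps `f` to a separable polynomial. -/
def derivResultant {R : Type*} [CommRing R] (f : R[X]) : R :=
  resultant f f.derivative f.natDegree (f.natDegree - 1)

theorem derivResultant_ne_zero_of_separable_map {R K : Type*} [CommRing R] [Field K] [CharZero K]
    {φ : R →+* K} (hφ : Function.Injective φ) {f : R[X]} (hf : (f.map φ).Separable) :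
    derivResultant f ≠ 0 := by
  have hdeg : f.derivative.natDegree = f.natDegree - 1 := by
    rw [← natDegree_map_eq_of_injective hφ f.derivative, ← derivative_map, natDegree_derivative,
      natDegree_map_eq_of_injective hφ]
  rw [derivResultant, ← hdeg]
  exact resultant_ne_zero_of_isCoprime_map hφ (by rw [← derivative_map]; exact hf)

theorem natDegree_map_of_map_derivResultant_ne_zero {R S : Type*} [CommRing R] [CommRing S]
    {φ : R →+* S} {f : R[X]} (hf : 0 < f.natDegree) (h : φ (derivResultant f) ≠ 0) :
    (f.map φ).natDegree = f.natDegree := by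
  refine natDegree_map_of_leadingCoeff_ne_zero φ fun h0 ↦ h ?_
  rw [derivResultant, resultant_deriv (natDegree_pos_iff_degree_pos.1 hf), map_mul, map_mul, h0,
    mul_zero, zero_mul]

theorem separable_map_of_map_derivResultant_ne_zero {R K : Type*} [CommRing R] [Field K]
    {φ : R →+* K} {f : R[X]} (hf : 0 < f.natDegree) (h : φ (derivResultant f) ≠ 0) :
    (f.map φ).Separable := by
  obtain ⟨u, v, -, -, huv⟩ := exists_mul_add_mul_eq_C_resultant f f.derivative le_rfl
    (natDegree_derivative_le f) (.inl hf.ne')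
  have bezout : f.map φ * u.map φ + (f.map φ).derivative * v.map φ = C (φ (derivResultant f)) := by
    simpa [derivative_map, derivResultant] using congrArg (Polynomial.map φ) huv
  have hC : C (φ (derivResultant f))⁻¹ * C (φ (derivResultant f)) = 1 := by
    rw [← C_mul, inv_mul_cancel₀ h, C_1]
  refine ⟨C (φ (derivResultant f))⁻¹ * u.map φ, C (φ (derivResultant f))⁻¹ * v.map φ, ?_⟩
  rw [← hC, ← bezout]
  ring

theorem totalDegree_derivResultant_le {R σ : Type*} [CommRing R] {f : (MvPolynomial σ R)[X]}
    {B D : ℕ} (hf : ∀ i, (f.coeff i).totalDegree ≤ B) (hD : f.natDegree ≤ D) :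
    (derivResultant f).totalDegree ≤ 2 * D * B := by
  have hf' (i : ℕ) : (f.derivative.coeff i).totalDegree ≤ B := by
    rw [coeff_derivative, ← Nat.cast_succ, ← map_natCast (MvPolynomial.C (σ := σ) (R := R))]
    refine (MvPolynomial.totalDegree_mul _ _).trans ?_
    rw [MvPolynomial.totalDegree_C, add_zero]
    exact hf (i + 1)
  refine (totalDegree_resultant_le hf hf' _ _).trans ?_
  gcongr
  omega

theorem abs_map_derivResultant_le {R S : Type*} [CommRing R] [CommRing S] [LinearOrder S]
    [IsStrictOrderedRing S] {φ : R →+* S} {f : R[X]} {B : S} {D : ℕ}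
    (hf : ∀ i, |φ (f.coeff i)| ≤ B) (hB : 1 ≤ B) (hD : f.natDegree ≤ D) :
    |φ (derivResultant f)| ≤ (2 * D).factorial * (D * B) ^ (2 * D) := by
  obtain rfl | hD0 := D.eq_zero_or_pos
  · simp [derivResultant, Nat.le_zero.1 hD]
  have hD1 : (1 : S) ≤ D := by exact_mod_cast hD0
  have hDB : B ≤ D * B := le_mul_of_one_le_left (by linarith) hD1
  have hf' (i : ℕ) : |(f.map φ).derivative.coeff i| ≤ D * B := by
    obtain hi | hi := lt_or_ge i D
    · rw [coeff_derivative, coeff_map, abs_mul, mul_comm, ← Nat.cast_succ, Nat.abs_cast]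
      gcongr
      exacts [hi, hf _]
    · rw [coeff_derivative, coeff_eq_zero_of_natDegree_lt
        (natDegree_map_le.trans_lt (by omega)), zero_mul, abs_zero]
      linarith
  have hf (i : ℕ) : |(f.map φ).coeff i| ≤ D * B := by
    rw [coeff_map]
    exact (hf i).trans hDB
  rw [derivResultant, ← resultant_map_map, ← derivative_map]
  refine (abs_resultant_le hf hf' _ _).trans ?_
  gcongr
  · omega
  · linarith
  · omega

end DerivResultant

section Height

theorem exists_eval_ne_zero_of_totalDegree_le {σ : Type*} [Finite σ] {g : MvPolynomial σ ℤ}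
    (hg : g ≠ 0) {T : ℕ} (hT : g.totalDegree ≤ T) :
    ∃ s : σ → ℤ, (∀ i, 0 ≤ s i ∧ s i ≤ T) ∧ MvPolynomial.eval s g ≠ 0 := by
  by_contra! h
  refine hg (MvPolynomial.eq_zero_of_eval_zero_at_prod_finset g (fun _ ↦ Finset.Icc 0 (T : ℤ))
    (fun i ↦ ?_) fun s hs ↦ h s fun i ↦ Finset.mem_Icc.1 (hs i))
  have := (MvPolynomial.degreeOf_le_totalDegree g i).trans hT
  simp only [Int.card_Icc]
  omega

variable {σ : Type*} [Fintype σ]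

theorem card_support_le_of_totalDegree_le {R : Type*} [CommSemiring R] {g : MvPolynomial σ R}
    {D : ℕ} (hD : g.totalDegree ≤ D) : g.support.card ≤ (D + 1) ^ Fintype.card σ := by
  classical
  have maps (m : σ →₀ ℕ) (hm : m ∈ g.support) :
      (m : σ → ℕ) ∈ Fintype.piFinset fun _ : σ ↦ Finset.range (D + 1) := by
    refine Fintype.mem_piFinset.2 fun i ↦ Finset.mem_range_succ_iff.2 ?_
    exact (MvPolynomial.monomial_le_degreeOf i hm).trans
      ((MvPolynomial.degreeOf_le_totalDegree g i).trans hD)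
  simpa using Finset.card_le_card_of_injOn _ maps DFunLike.coe_injective.injOn

theorem abs_eval_le_of_totalDegree_le {g : MvPolynomial σ ℤ} {D : ℕ} (hD : g.totalDegree ≤ D)
    {A b : ℤ} (hA : ∀ m, |g.coeff m| ≤ A) (hb : 1 ≤ b) {s : σ → ℤ} (hs : ∀ i, |s i| ≤ b) :
    |MvPolynomial.eval s g| ≤ (D + 1) ^ Fintype.card σ * (A * b ^ D) := by
  have hA0 : 0 ≤ A := (abs_nonneg _).trans (hA 0)
  have monomial_le (m : σ →₀ ℕ) (hm : m ∈ g.support) :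
      |g.coeff m * ∏ i, s i ^ m i| ≤ A * b ^ D := by
    rw [abs_mul, Finset.abs_prod]
    gcongr
    · exact hA m
    calc ∏ i, |s i ^ m i| ≤ ∏ i, b ^ m i := by
          gcongr with i
          rw [abs_pow]
          gcongr
          exact hs i
      _ = b ^ ∑ i, m i := Finset.prod_pow_eq_pow_sum _ _ _
      _ ≤ b ^ D := by
          gcongr b ^ ?_
          rw [← Finsupp.sum_fintype m (fun _ e ↦ e) fun _ ↦ rfl]
          exact (MvPolynomial.le_totalDegree hm).trans hD
  rw [MvPolynomial.eval_eq']
  calc |∑ m ∈ g.support, g.coeff m * ∏ i, s i ^ m i|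
      ≤ ∑ m ∈ g.support, |g.coeff m * ∏ i, s i ^ m i| := Finset.abs_sum_le_sum_abs _ _
    _ ≤ g.support.card • (A * b ^ D) := Finset.sum_le_card_nsmul _ _ _ monomial_le
    _ ≤ (D + 1) ^ Fintype.card σ * (A * b ^ D) := by
        rw [nsmul_eq_mul]
        gcongr
        exact_mod_cast card_support_le_of_totalDegree_le hD

/-- The factor in front of `A ^ (2 * D)` in the bound for a nonzero value of `derivResultant P` at
an integer point, for `P` of degree at most `D` in `k + 1` variables with coefficients at most `A`.
The point is found in the box of side `2 * D * D`, the degree of `derivResultant P`. -/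
def derivResultantConstant (k D : ℕ) : ℕ :=
  (2 * D).factorial * (D * ((D + 1) ^ k * (2 * D * D) ^ D)) ^ (2 * D)

theorem exists_eval_derivResultant_ne_zero_and_abs_le {P : (MvPolynomial σ ℤ)[X]} {A D : ℕ}
    (hA0 : 0 < A) (hD0 : 0 < D) (hP : derivResultant P ≠ 0) (hPD : P.natDegree ≤ D)
    (hD : ∀ i, (P.coeff i).totalDegree ≤ D) (hA : ∀ i m, |(P.coeff i).coeff m| ≤ (A : ℤ)) :
    ∃ s : σ → ℤ, MvPolynomial.eval s (derivResultant P) ≠ 0 ∧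
      (MvPolynomial.eval s (derivResultant P)).natAbs ≤
        derivResultantConstant (Fintype.card σ) D * A ^ (2 * D) := by
  obtain ⟨s, hs, hs0⟩ :=
    exists_eval_ne_zero_of_totalDegree_le hP (totalDegree_derivResultant_le hD hPD)
  have hT : (1 : ℤ) ≤ (2 * D * D : ℕ) := by exact_mod_cast Nat.mul_pos (by omega) hD0
  have coeff_le (i : ℕ) := abs_eval_le_of_totalDegree_le (hD i) (hA i) hT
    fun j ↦ (abs_of_nonneg (hs j).1).trans_le (hs j).2
  have one_le : (1 : ℤ) ≤ (D + 1) ^ Fintype.card σ * (A * (2 * D * D : ℕ) ^ D) := by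
    have : 0 < (D + 1) ^ Fintype.card σ * (A * (2 * D * D) ^ D) := by positivity
    exact_mod_cast this
  refine ⟨s, hs0, ?_⟩
  zify
  refine (abs_map_derivResultant_le coeff_le one_le hPD).trans_eq ?_
  rw [derivResultantConstant]
  push_cast
  ring

theorem abs_coeff_le_mvNorm {n : ℕ} (H : MvPolynomial (Fin n) ℤ) (m : Fin n →₀ ℕ) :
    |H.coeff m| ≤ (mvNorm H : ℤ) := by
  by_cases hm : m ∈ H.support
  · rw [Int.abs_eq_natAbs]
    exact_mod_cast Finset.le_sup (f := fun m ↦ (H.coeff m).natAbs) hm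
  · simp [MvPolynomial.notMem_support_iff.1 hm]

theorem totalDegree_coeff_finSuccEquiv_le {R : Type*} [CommSemiring R] {k : ℕ}
    (H : MvPolynomial (Fin (k + 1)) R) (i : ℕ) :
    ((MvPolynomial.finSuccEquiv R k H).coeff i).totalDegree ≤ H.totalDegree := by
  by_cases hi : (MvPolynomial.finSuccEquiv R k H).coeff i = 0
  · simp [hi]
  · exact le_self_add.trans (MvPolynomial.totalDegree_coeff_finSuccEquiv_add_le H i hi)

theorem exists_eval_derivResultant_finSuccEquiv_ne_zero_and_le {k D : ℕ}
    {H : MvPolynomial (Fin (k + 1)) ℤ} (hH : 0 < H.degreeOf 0) (hH0 : 0 < mvNorm H)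
    (hD : H.totalDegree ≤ D) (hP : derivResultant (MvPolynomial.finSuccEquiv ℤ k H) ≠ 0) :
    ∃ s : Fin k → ℤ,
      MvPolynomial.eval s (derivResultant (MvPolynomial.finSuccEquiv ℤ k H)) ≠ 0 ∧
      (MvPolynomial.eval s (derivResultant (MvPolynomial.finSuccEquiv ℤ k H))).natAbs ≤
        derivResultantConstant k D * mvNorm H ^ (2 * D) := by
  have hdeg := (MvPolynomial.degreeOf_le_totalDegree H 0).trans hD
  simpa using exists_eval_derivResultant_ne_zero_and_abs_le hH0 (hH.trans_le hdeg) hP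
    (by rwa [MvPolynomial.natDegree_finSuccEquiv])
    (fun i ↦ (totalDegree_coeff_finSuccEquiv_le H i).trans hD)
    fun i m ↦ by rw [MvPolynomial.finSuccEquiv_coeff_coeff]; exact abs_coeff_le_mvNorm H _

end Height

section FiberSums

theorem finSuccEquiv_map {R S : Type*} [CommSemiring R] [CommSemiring S] (φ : R →+* S) {k : ℕ}
    (H : MvPolynomial (Fin (k + 1)) R) :
    MvPolynomial.finSuccEquiv S k (MvPolynomial.map φ H) =
      (MvPolynomial.finSuccEquiv R k H).map (MvPolynomial.map φ) := by
  ext i m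
  simp only [MvPolynomial.finSuccEquiv_coeff_coeff, coeff_map, MvPolynomial.coeff_map]

theorem eval_cons_map_eq_eval_map_finSuccEquiv {R S : Type*} [CommSemiring R] [CommSemiring S]
    (φ : R →+* S) {k : ℕ} (H : MvPolynomial (Fin (k + 1)) R) (a : S) (y : Fin k → S) :
    MvPolynomial.eval (Fin.cons a y : Fin (k + 1) → S) (MvPolynomial.map φ H) =
      ((MvPolynomial.finSuccEquiv R k H).map
        ((MvPolynomial.eval y).comp (MvPolynomial.map φ))).eval a := by
  rw [MvPolynomial.eval_eq_eval_mv_eval', finSuccEquiv_map, Polynomial.map_map]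

theorem card_filter_eval_eq_zero_mul_card_le {F : Type*} [Field F] [Fintype F] [DecidableEq F]
    {k T : ℕ} {g : MvPolynomial (Fin k) F} (hg : g ≠ 0) (hT : g.totalDegree ≤ T) :
    (Finset.univ.filter fun y ↦ MvPolynomial.eval y g = 0).card * Fintype.card F ≤
      T * Fintype.card F ^ k := by
  have h := MvPolynomial.schwartz_zippel_totalDegree hg Finset.univ
  have hF : (0 : ℚ≥0) < Fintype.card F := by exact_mod_cast Fintype.card_pos
  rw [Fintype.piFinset_univ, Finset.card_univ, div_le_div_iff₀ (by positivity) hF] at h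
  exact (by exact_mod_cast h : _ ≤ g.totalDegree * Fintype.card F ^ k).trans (by gcongr)

variable {p k D : ℕ} [Fact p.Prime] {χ : MulChar (ZMod p) ℂ} {H : MvPolynomial (Fin (k + 1)) ℤ}

theorem norm_sum_mulChar_eval_cons_le (hχ : 2 ≤ orderOf χ) (hH : 0 < H.degreeOf 0)
    (hD : H.totalDegree ≤ D) {y : Fin k → ZMod p}
    (hy : MvPolynomial.eval y (MvPolynomial.map (Int.castRingHom (ZMod p))
      (derivResultant (MvPolynomial.finSuccEquiv ℤ k H))) ≠ 0) :
    ‖∑ a, χ (MvPolynomial.eval (Fin.cons a y : Fin (k + 1) → ZMod p)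
      (MvPolynomial.map (Int.castRingHom (ZMod p)) H))‖ ≤ weilConstant (orderOf χ) D * √p := by
  have hP : 0 < (MvPolynomial.finSuccEquiv ℤ k H).natDegree := by
    rwa [MvPolynomial.natDegree_finSuccEquiv]
  have hdeg := natDegree_map_of_map_derivResultant_ne_zero
    (φ := (MvPolynomial.eval y).comp (MvPolynomial.map (Int.castRingHom (ZMod p)))) hP hy
  simp only [eval_cons_map_eq_eval_map_finSuccEquiv]
  refine norm_sum_mulChar_eval_le hχ
    (separable_map_of_map_derivResultant_ne_zero hP hy).squarefree (by rwa [hdeg]) ?_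
  rw [hdeg, MvPolynomial.natDegree_finSuccEquiv]
  exact (MvPolynomial.degreeOf_le_totalDegree H 0).trans hD

theorem sum_filter_zero_norm_sq_mulChar_le {ψ : AddChar (ZMod p) ℂ} (hψ : ψ.IsPrimitive)
    (hχ : 2 ≤ orderOf χ) (hH : 0 < H.degreeOf 0) (hD : H.totalDegree ≤ D)
    (hΔ : MvPolynomial.map (Int.castRingHom (ZMod p))
      (derivResultant (MvPolynomial.finSuccEquiv ℤ k H)) ≠ 0) :
    ∑ u with u 0 = 0, ‖∑ x, χ (MvPolynomial.eval x
        (MvPolynomial.map (Int.castRingHom (ZMod p)) H)) * ψ (u ⬝ᵥ x)‖ ^ 2 ≤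
      (weilConstant (orderOf χ) D ^ 2 + (2 * D * D : ℕ)) * (p : ℝ) ^ (2 * k + 1) := by
  set Δ := MvPolynomial.map (Int.castRingHom (ZMod p))
    (derivResultant (MvPolynomial.finSuccEquiv ℤ k H))
  have hΔT : Δ.totalDegree ≤ 2 * D * D := by
    refine (Finset.sup_mono (MvPolynomial.support_map_subset _ _)).trans
      (totalDegree_derivResultant_le
        (fun i ↦ (totalDegree_coeff_finSuccEquiv_le H i).trans hD) ?_)
    rw [MvPolynomial.natDegree_finSuccEquiv]
    exact (MvPolynomial.degreeOf_le_totalDegree H 0).trans hD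
  have h := sum_filter_zero_norm_sq_le hψ
    (Φ := fun x ↦ χ (MvPolynomial.eval x (MvPolynomial.map (Int.castRingHom (ZMod p)) H)))
    (fun x ↦ DirichletCharacter.norm_le_one χ _) (c := weilConstant (orderOf χ) D)
    (T := (2 * D * D : ℕ)) (Z := {y | MvPolynomial.eval y Δ = 0})
    (by exact_mod_cast card_filter_eval_eq_zero_mul_card_le hΔ hΔT) fun y hy ↦ by
      rw [ZMod.card]
      exact norm_sum_mulChar_eval_cons_le hχ hH hD fun h0 ↦ hy (Finset.mem_filter_univ _ |>.2 h0)
  rwa [ZMod.card] at h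

end FiberSums

section PrimeFactors

open Real

theorem card_filter_primeFactors_le_le (N : ℕ) {y : ℝ} (hy : 0 ≤ y) :
    ((N.primeFactors.filter fun q : ℕ ↦ (q : ℝ) ≤ y).card : ℝ) ≤ y := by
  have hsub : (N.primeFactors.filter fun q : ℕ ↦ (q : ℝ) ≤ y) ⊆ Finset.Ioc 0 ⌊y⌋₊ := fun q hq ↦ by
    rw [Finset.mem_filter] at hq
    exact Finset.mem_Ioc.2 ⟨(Nat.prime_of_mem_primeFactors hq.1).pos, Nat.le_floor hq.2⟩
  refine (Nat.cast_le.2 (Finset.card_le_card hsub)).trans ?_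
  rw [Nat.card_Ioc, Nat.sub_zero]
  exact Nat.floor_le hy

theorem pow_card_filter_primeFactors_not_le_le {N : ℕ} (hN : N ≠ 0) {y : ℝ} (hy : 0 ≤ y) :
    y ^ (N.primeFactors.filter fun q : ℕ ↦ ¬ (q : ℝ) ≤ y).card ≤ N := by
  set S := N.primeFactors.filter fun q : ℕ ↦ ¬ (q : ℝ) ≤ y
  have prod_dvd : ∏ q ∈ S, q ∣ N :=
    (Finset.prod_dvd_prod_of_subset _ _ _ (Finset.filter_subset _ _)).trans
      (Nat.prod_primeFactors_dvd N)
  calc y ^ S.card = ∏ _q ∈ S, y := (Finset.prod_const y).symm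
    _ ≤ ∏ q ∈ S, (q : ℝ) :=
        Finset.prod_le_prod (fun _ _ ↦ hy) fun q hq ↦ (not_le.1 (Finset.mem_filter.1 hq).2).le
    _ ≤ N := by
        rw [← Nat.cast_prod]
        exact Nat.cast_le.2 (Nat.le_of_dvd (Nat.pos_of_ne_zero hN) prod_dvd)

theorem card_primeFactors_le_add_log_div_log {N : ℕ} (hN : N ≠ 0) {y : ℝ} (hy : 1 < y) :
    (N.primeFactors.card : ℝ) ≤ y + log N / log y := by
  have hy0 : 0 < y := by linarith
  rw [← Finset.card_filter_add_card_filter_not (s := N.primeFactors) (fun q : ℕ ↦ (q : ℝ) ≤ y),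
    Nat.cast_add]
  refine add_le_add (card_filter_primeFactors_le_le N hy0.le) ?_
  rw [le_div_iff₀ (log_pos hy), ← log_pow]
  exact log_le_log (by positivity) (pow_card_filter_primeFactors_not_le_le hN hy0.le)

theorem one_lt_log_of_three_le {x : ℝ} (hx : 3 ≤ x) : 1 < log x :=
  (lt_log_iff_exp_lt (by linarith)).2 (exp_one_lt_three.trans_le hx)

theorem card_primeFactors_le_mul_log_div_log_log {N : ℕ} (hN : N ≠ 0) {A x : ℝ} (hx : 3 ≤ x)
    (h : log N ≤ A * log x) :
    (N.primeFactors.card : ℝ) ≤ (2 + 2 * A) * log x / log (log x) := by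
  have hw : 1 < log x := one_lt_log_of_three_le hx
  have hy : 1 < √(log x) := by rwa [lt_sqrt zero_le_one, one_pow]
  have hy0 : 0 < log √(log x) := log_pos hy
  have hlog : log (log x) = 2 * log √(log x) := by
    rw [log_sqrt (by linarith)]
    ring
  have key : √(log x) * log √(log x) ≤ log x := by
    calc √(log x) * log √(log x) ≤ √(log x) * √(log x) := by
          gcongr
          exact log_le_self (sqrt_nonneg _)
      _ = log x := mul_self_sqrt (by linarith)
  calc (N.primeFactors.card : ℝ) ≤ √(log x) + log N / log √(log x) :=
        card_primeFactors_le_add_log_div_log hN hy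
    _ = (√(log x) * log √(log x) + log N) / log √(log x) := by field_simp
    _ ≤ (log x + A * log x) / log √(log x) := by gcongr
    _ = (2 + 2 * A) * log x / log (log x) := by
        rw [hlog]
        field_simp

theorem log_le_add_mul_log {K x N M : ℕ} (hx : 3 ≤ x) (hN : N ≠ 0) (h : N ≤ K * x ^ M) :
    log N ≤ (log K + M) * log x := by
  have hK : K ≠ 0 := by rintro rfl; omega
  have hx1 : 1 ≤ log x := (one_lt_log_of_three_le (by exact_mod_cast hx)).le
  calc log N ≤ log (K * x ^ M) := log_le_log (by positivity) (by exact_mod_cast h)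
    _ = log K + M * log x := by rw [log_mul (by positivity) (by positivity), log_pow]
    _ ≤ log K * log x + M * log x := by
        gcongr
        exact le_mul_of_one_le_right (log_natCast_nonneg K) hx1
    _ = (log K + M) * log x := by ring

end PrimeFactors

section AbsoluteIrreducibility

theorem separable_map_fractionRing_of_irreducible_map {R A : Type*} [CommRing R] [IsDomain R]
    [CommRing A] [IsDomain A] [IsGCDMonoid A] [CharZero A] {φ : R →+* A}
    (hφ : Function.Injective φ) {f : R[X]} (hf : f.natDegree ≠ 0) (hirr : Irreducible (f.map φ)) :
    (f.map (algebraMap R (FractionRing R))).Separable := by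
  have hprim : (f.map φ).IsPrimitive :=
    hirr.isPrimitive (by rwa [natDegree_map_eq_of_injective hφ])
  have : CharZero (FractionRing A) :=
    charZero_of_injective_algebraMap (IsFractionRing.injective A (FractionRing A))
  have hsep : ((f.map φ).map (algebraMap A (FractionRing A))).Separable :=
    (hprim.irreducible_iff_irreducible_map_fraction_map.1 hirr).separable
  have hcomp : (IsFractionRing.map (K := FractionRing R) (L := FractionRing A) hφ).comp
      (algebraMap R (FractionRing R)) = (algebraMap A (FractionRing A)).comp φ :=
    IsLocalization.map_comp (nonZeroDivisors_le_comap_nonZeroDivisors_of_injective φ hφ)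
  rwa [← Polynomial.separable_map (IsFractionRing.map (K := FractionRing R)
    (L := FractionRing A) hφ), Polynomial.map_map, hcomp, ← Polynomial.map_map]

theorem separable_map_finSuccEquiv_of_irreducible_map {R K : Type*} [CommRing R] [IsDomain R]
    [Field K] [CharZero K] {φ : R →+* K} (hφ : Function.Injective φ) {k : ℕ}
    {H : MvPolynomial (Fin (k + 1)) R} (hH : 0 < H.degreeOf 0)
    (hirr : Irreducible (MvPolynomial.map φ H)) :
    ((MvPolynomial.finSuccEquiv R k H).map
      (algebraMap _ (FractionRing (MvPolynomial (Fin k) R)))).Separable := by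
  refine separable_map_fractionRing_of_irreducible_map (MvPolynomial.map_injective φ hφ) ?_ ?_
  · rw [MvPolynomial.natDegree_finSuccEquiv]
    exact hH.ne'
  · rw [← finSuccEquiv_map]
    exact (MulEquiv.irreducible_iff (MvPolynomial.finSuccEquiv K k)).2 hirr

end AbsoluteIrreducibility

theorem eZp_eq_stdAddChar (p : ℕ) [NeZero p] : eZp p = ZMod.stdAddChar (N := p) := by
  ext a
  rw [eZp, ZMod.stdAddChar_apply, ZMod.toCircle_apply]

theorem map_intCast_ne_zero_of_notMem_primeFactors {σ : Type*} {g : MvPolynomial σ ℤ} {s : σ → ℤ}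
    (hs : MvPolynomial.eval s g ≠ 0) {p : ℕ} (hp : p.Prime)
    (hpE : p ∉ (MvPolynomial.eval s g).natAbs.primeFactors) :
    MvPolynomial.map (Int.castRingHom (ZMod p)) g ≠ 0 := by
  refine fun h0 ↦ hpE (Nat.mem_primeFactors.2 ⟨hp, ?_, Int.natAbs_ne_zero.2 hs⟩)
  have h := MvPolynomial.map_eval (Int.castRingHom (ZMod p)) s g
  rw [h0, map_zero] at h
  exact Int.natCast_dvd.1 ((ZMod.intCast_zmod_eq_zero_iff_dvd _ _).1 h)

theorem statement17_general (k D : ℕ) :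
    ∃ C : ℝ, 0 < C ∧ ∀ d : ℕ, 2 ≤ d → ∃ C' : ℝ, 0 < C' ∧
      ∀ H : MvPolynomial (Fin (k + 1)) ℤ,
        ((MvPolynomial.finSuccEquiv ℤ k H).map
          (algebraMap _ (FractionRing (MvPolynomial (Fin k) ℤ)))).Separable →
        1 ≤ H.degreeOf 0 → 3 ≤ mvNorm H → H.totalDegree ≤ D →
        ∃ E : Finset ℕ, (∀ p ∈ E, p.Prime) ∧
          (E.card : ℝ) ≤ C * Real.log (mvNorm H) / Real.log (Real.log (mvNorm H)) ∧
          ∀ p : ℕ, ∀ hp : p.Prime, p ∉ E →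
            haveI : NeZero p := ⟨hp.ne_zero⟩;
            ∀ χ : MulChar (ZMod p) ℂ, orderOf χ = d →
              ∑ u : Fin (k + 1) → ZMod p with u 0 = 0,
                ‖∑ x, χ (MvPolynomial.eval x (MvPolynomial.map (Int.castRingHom (ZMod p)) H)) *
                  eZp p (∑ i, u i * x i)‖ ^ 2 ≤ C' * (p : ℝ) ^ (2 * k + 1) := by
  refine ⟨2 + 2 * (Real.log (derivResultantConstant k D) + (2 * D : ℕ)), by positivity,
    fun d hd ↦ ⟨weilConstant d D ^ 2 + (2 * D * D : ℕ), by unfold weilConstant; positivity,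
      fun H hsep hdeg h3 hD ↦ ?_⟩⟩
  obtain ⟨s, hs, hle⟩ := exists_eval_derivResultant_finSuccEquiv_ne_zero_and_le hdeg (by omega) hD
    (derivResultant_ne_zero_of_separable_map (IsFractionRing.injective _ _) hsep)
  have hN := Int.natAbs_ne_zero.2 hs
  refine ⟨_, fun p ↦ Nat.prime_of_mem_primeFactors, card_primeFactors_le_mul_log_div_log_log hN
    (by exact_mod_cast h3) (log_le_add_mul_log h3 hN hle), fun p hp hpE χ hχ ↦ ?_⟩
  have : Fact p.Prime := ⟨hp⟩
  rw [← hχ, eZp_eq_stdAddChar]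
  exact sum_filter_zero_norm_sq_mulChar_le (ZMod.isPrimitive_stdAddChar p) (hχ ▸ hd) hdeg hD
    (map_intCast_ne_zero_of_notMem_primeFactors hs hp hpE)

theorem statement17 (n : ℕ) (hn : 1 ≤ n) (DH : ℕ) :
    ∃ C : ℝ, 0 < C ∧ ∀ d : ℕ, 2 ≤ d → ∃ C' : ℝ, 0 < C' ∧
      ∀ H : MvPolynomial (Fin n) ℤ,
        Irreducible (MvPolynomial.map (Int.castRingHom (AlgebraicClosure ℚ)) H) →
        1 ≤ MvPolynomial.degreeOf (⟨0, by omega⟩ : Fin n) H →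
        3 ≤ mvNorm H → H.totalDegree = DH →
        ∃ E : Finset ℕ, (∀ p ∈ E, p.Prime) ∧
          (E.card : ℝ) ≤
            C * Real.log (mvNorm H : ℝ) / Real.log (Real.log (mvNorm H : ℝ)) ∧
          ∀ p : ℕ, ∀ hp : p.Prime, p ∉ E →
            haveI : NeZero p := ⟨hp.ne_zero⟩;
            ∀ χ : MulChar (ZMod p) ℂ, orderOf χ = d →
              (∑ u ∈ Finset.univ.filter (fun u : Fin n → ZMod p => u ⟨0, by omega⟩ = 0),
                ‖∑ x : Fin n → ZMod p,
                    χ (MvPolynomial.eval x (MvPolynomial.map (Int.castRingHom (ZMod p)) H)) *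
                      eZp p (∑ i, u i * x i)‖ ^ 2)
                ≤ C' * (p : ℝ) ^ (2 * n - 1) := by
  obtain ⟨k, rfl⟩ : ∃ k, n = k + 1 := ⟨n - 1, by omega⟩
  obtain ⟨C, hC, h⟩ := statement17_general k DH
  refine ⟨C, hC, fun d hd ↦ (h d hd).imp fun C' ⟨hC', h⟩ ↦ ⟨hC', fun H hirr hdeg h3 hD ↦ ?_⟩⟩
  exact h H (separable_map_finSuccEquiv_of_irreducible_map (RingHom.injective_int _) hdeg hirr)
    hdeg h3 hD.le
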